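/- Let u : D_r ⊂ ℝ² → ℝᵐ be smooth with |Du| ≤ α and |D²u| ≤ β. Then for every k ≥ 0 there is C = C(r, α, β, k) such that ‖D²u‖_{W^{k,2}(D_r)} ≤ C Σ_{s=1}^{max(k,1)} ‖A‖^s_{H^{k,2}}, where A is the second fundamental form of the graph of u. In particular, for k = 0, ‖D²u‖_{L²} ≤ C₀‖A‖_{L²}. -/

import Mathlib

noncomputable section Stmt18

namespace Stmt18

variable {m : ℕ}

/-- Partial derivative of a map into the ambient ℝ^{2+m} ≅ ℝ² ⊕ ℝᵐ. -/
def pd (f : (Fin 2 → ℝ) → (Fin 2 ⊕ Fin m → ℝ)) (i : Fin 2) :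
    (Fin 2 → ℝ) → (Fin 2 ⊕ Fin m → ℝ) :=
  fun x => fderiv ℝ f x (Pi.single i 1)

def dotA (v w : Fin 2 ⊕ Fin m → ℝ) : ℝ := ∑ A, v A * w A

/-- The graph immersion F(x) = (x, u(x)). -/
def gr (u : (Fin 2 → ℝ) → (Fin m → ℝ)) : (Fin 2 → ℝ) → (Fin 2 ⊕ Fin m → ℝ) :=
  fun x => Sum.elim x (u x)

def gmet (F : (Fin 2 → ℝ) → (Fin 2 ⊕ Fin m → ℝ)) (x : Fin 2 → ℝ) :
    Matrix (Fin 2) (Fin 2) ℝ :=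
  Matrix.of fun i j => dotA (pd F i x) (pd F j x)

def nproj (F : (Fin 2 → ℝ) → (Fin 2 ⊕ Fin m → ℝ)) (x : Fin 2 → ℝ)
    (v : Fin 2 ⊕ Fin m → ℝ) : Fin 2 ⊕ Fin m → ℝ :=
  v - ∑ k, ∑ l, ((gmet F x)⁻¹ k l * dotA v (pd F l x)) • pd F k x

def chr (F : (Fin 2 → ℝ) → (Fin 2 ⊕ Fin m → ℝ)) (i j k : Fin 2)
    (x : Fin 2 → ℝ) : ℝ :=
  ∑ l, (gmet F x)⁻¹ k l * dotA (pd (pd F i) j x) (pd F l x)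

def sffT (F : (Fin 2 → ℝ) → (Fin 2 ⊕ Fin m → ℝ)) :
    (Fin 2 → ℝ) → (Fin 2 → Fin 2) → (Fin 2 ⊕ Fin m → ℝ) :=
  fun x I => nproj F x (pd (pd F (I 0)) (I 1) x)

def covDer (F : (Fin 2 → ℝ) → (Fin 2 ⊕ Fin m → ℝ)) (l : ℕ)
    (T : (Fin 2 → ℝ) → (Fin l → Fin 2) → (Fin 2 ⊕ Fin m → ℝ)) :
    (Fin 2 → ℝ) → (Fin (l+1) → Fin 2) → (Fin 2 ⊕ Fin m → ℝ) :=
  fun x I =>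
    nproj F x (pd (fun y => T y (Fin.tail I)) (I 0) x)
      - ∑ a : Fin l, ∑ mm : Fin 2,
          chr F (I 0) (Fin.tail I a) mm x • T x (Function.update (Fin.tail I) a mm)

/-- Iterated covariant derivative ∇ˡA. -/
def covIter (F : (Fin 2 → ℝ) → (Fin 2 ⊕ Fin m → ℝ)) :
    (l : ℕ) → (Fin 2 → ℝ) → (Fin (l+2) → Fin 2) → (Fin 2 ⊕ Fin m → ℝ)
  | 0 => sffT F
  | (l+1) => covDer F (l+2) (covIter F l)

/-- Pointwise squared g-norm `|∇ˡA|²_g`. -/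
def nCov2 (F : (Fin 2 → ℝ) → (Fin 2 ⊕ Fin m → ℝ)) (l : ℕ) (x : Fin 2 → ℝ) : ℝ :=
  ∑ I : Fin (l+2) → Fin 2, ∑ J : Fin (l+2) → Fin 2,
    (∏ s, (gmet F x)⁻¹ (I s) (J s)) * dotA (covIter F l x I) (covIter F l x J)

/-- Iterated partial derivatives Dˡu. -/
def pdIter (u : (Fin 2 → ℝ) → (Fin m → ℝ)) :
    (l : ℕ) → (Fin 2 → ℝ) → (Fin l → Fin 2) → (Fin m → ℝ)
  | 0 => fun x _ => u x
  | (l+1) => fun x I =>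
      fderiv ℝ (fun y => pdIter u l y (Fin.tail I)) x (Pi.single (I 0) 1)

/-- The open disk of radius r in ℝ². -/
def Dr (r : ℝ) : Set (Fin 2 → ℝ) := {x | x 0 ^ 2 + x 1 ^ 2 < r ^ 2}

/-- The Sobolev norm `‖A‖_{H^{k,2}}` of the second fundamental form of the graph. -/
def HAnorm (r : ℝ) (k : ℕ) (u : (Fin 2 → ℝ) → (Fin m → ℝ)) : ℝ :=
  Real.sqrt (∑ l ∈ Finset.range (k+1),
    ∫ x in Dr r, nCov2 (gr u) l x * Real.sqrt (gmet (gr u) x).det)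

/-- The usual Sobolev norm `‖D²u‖_{W^{k,2}}` of the Hessian on the disk. -/
def Wnorm (r : ℝ) (k : ℕ) (u : (Fin 2 → ℝ) → (Fin m → ℝ)) : ℝ :=
  Real.sqrt (∑ l ∈ Finset.range (k+1),
    ∫ x in Dr r, ∑ I : Fin (l+2) → Fin 2, ∑ a, (pdIter u (l+2) x I a) ^ 2)

end Stmt18

section

namespace Stmt18
open MeasureTheory Set

lemma vander {n : ℕ} (t : Fin n → ℝ) (ht : Function.Injective t) :
    ∃ C > (0:ℝ), ∀ (a : Fin n → ℝ) (i : Fin n),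
      |a i| ≤ C * ∑ k, |∑ j, a j * t k ^ (j:ℕ)| := by
  set V := Matrix.vandermonde t
  have hV : IsUnit V.det := by
    rw [isUnit_iff_ne_zero]; exact Matrix.det_vandermonde_ne_zero_iff.mpr ht
  refine ⟨1 + ∑ i, ∑ k, |V⁻¹ i k|, by positivity, fun a i => ?_⟩
  have h1 : a = V⁻¹.mulVec (V.mulVec a) := by
    rw [Matrix.mulVec_mulVec, Matrix.nonsing_inv_mul _ hV, Matrix.one_mulVec]
  have h2 : ∀ k, V.mulVec a k = ∑ j, a j * t k ^ (j:ℕ) := by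
    intro k
    simp [V, Matrix.mulVec, dotProduct, Matrix.vandermonde_apply, mul_comm]
  have h3 : a i = ∑ k, V⁻¹ i k * ∑ j, a j * t k ^ (j:ℕ) := by
    conv_lhs => rw [h1]
    simp only [Matrix.mulVec, dotProduct] at h2 ⊢
    exact Finset.sum_congr rfl fun k _ => by rw [h2]
  rw [h3, Finset.mul_sum]
  refine (Finset.abs_sum_le_sum_abs _ _).trans (Finset.sum_le_sum fun k _ => ?_)
  rw [abs_mul]
  refine mul_le_mul_of_nonneg_right ?_ (abs_nonneg _)
  have e1 : |V⁻¹ i k| ≤ ∑ k, |V⁻¹ i k| :=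
    Finset.single_le_sum (f := fun k => |V⁻¹ i k|) (fun _ _ => abs_nonneg _) (Finset.mem_univ k)
  have e2 : ∑ k, |V⁻¹ i k| ≤ ∑ i, ∑ k, |V⁻¹ i k| :=
    Finset.single_le_sum (f := fun i => ∑ k, |V⁻¹ i k|)
      (fun _ _ => Finset.sum_nonneg fun _ _ => abs_nonneg _) (Finset.mem_univ i)
  linarith

lemma taylor1 (n : ℕ) : ∀ (φ : ℕ → ℝ → ℝ) (S G : ℝ),
    (∀ j, ∀ τ ∈ Icc 0 S, HasDerivAt (φ j) (φ (j+1) τ) τ) →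
    (∀ τ ∈ Icc 0 S, |φ n τ - φ n 0| ≤ G) →
    ∀ τ ∈ Icc 0 S, |φ 0 τ - ∑ i ∈ Finset.range (n+1), φ i 0 * τ ^ i / (i.factorial : ℝ)| ≤ τ ^ n * G := by
  induction n with
  | zero => intro φ S G _ h τ hτ; simpa using h τ hτ
  | succ n ih =>
    intro φ S G hd h T hT
    have ih' := ih (fun j => φ (j+1)) S G (fun j => hd (j+1)) h
    have hG : 0 ≤ G := (abs_nonneg _).trans (h T hT)
    set ψ : ℝ → ℝ := fun τ => φ 0 τ - ∑ i ∈ Finset.range (n+1+1), φ i 0 * τ ^ i / (i.factorial : ℝ) with hψ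
    have hder : ∀ τ ∈ Icc 0 T, HasDerivWithinAt ψ
        (φ 1 τ - ∑ i ∈ Finset.range (n+1), φ (i+1) 0 * τ ^ i / (i.factorial : ℝ)) (Icc 0 T) τ := by
      intro τ hτ
      apply HasDerivAt.hasDerivWithinAt
      refine (hd 0 τ ⟨hτ.1, hτ.2.trans hT.2⟩).sub ?_
      have : ∀ i ∈ Finset.range (n+1+1), HasDerivAt (fun τ : ℝ => φ i 0 * τ ^ i / (i.factorial : ℝ))
          (φ i 0 * (i * τ ^ (i-1)) / (i.factorial : ℝ)) τ := by
        intro i _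
        exact ((hasDerivAt_pow i τ).const_mul _).div_const _
      have := HasDerivAt.fun_sum this
      convert this using 1
      rw [Finset.sum_range_succ' _ (n+1)]
      simp only [Nat.cast_zero, zero_mul, mul_zero, zero_div, add_zero]
      refine Finset.sum_congr rfl fun i _ => ?_
      rw [Nat.factorial_succ]
      have : (i.factorial : ℝ) ≠ 0 := by positivity
      push_cast
      field_simp
    have := (convex_Icc (0:ℝ) T).norm_image_sub_le_of_norm_hasDerivWithin_le (C := T ^ n * G) hder
      (fun τ hτ => by
        rw [Real.norm_eq_abs]
        refine (ih' τ ⟨hτ.1, hτ.2.trans hT.2⟩).trans ?_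
        exact mul_le_mul_of_nonneg_right (pow_le_pow_left₀ hτ.1 hτ.2 n) hG)
      (left_mem_Icc.mpr hT.1) (right_mem_Icc.mpr hT.1)
    have h0 : ψ 0 = 0 := by
      simp only [hψ]
      rw [Finset.sum_range_succ']
      simp
    rw [h0, sub_zero, sub_zero, Real.norm_eq_abs, Real.norm_eq_abs, abs_of_nonneg hT.1] at this
    calc _ ≤ _ := this
      _ = _ := by ring

/-- nodes -/
noncomputable def nd (n : ℕ) (k : Fin (n+1)) : ℝ := ((k:ℕ)+1:ℝ)/(n+1)

lemma nd_pos (n) (k) : 0 < nd n k := by unfold nd; positivity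
lemma nd_le (n) (k) : nd n k ≤ 1 := by
  unfold nd
  rw [div_le_one (by positivity)]
  have : ((k:ℕ):ℝ) ≤ n := by exact_mod_cast Nat.lt_succ_iff.mp k.2
  linarith
lemma nd_inj (n) : Function.Injective (nd n) := by
  intro a b h
  unfold nd at h
  have : (n+1:ℝ) ≠ 0 := by positivity
  field_simp at h
  ext
  exact_mod_cast (add_right_cancel h)

lemma node (n : ℕ) : ∃ C > (0:ℝ), ∀ (φ : ℕ → ℝ → ℝ) (S G : ℝ),
    (∀ j, ∀ τ ∈ Icc 0 S, HasDerivAt (φ j) (φ (j+1) τ) τ) →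
    (∀ τ ∈ Icc 0 S, |φ n τ - φ n 0| ≤ G) →
    ∀ h, 0 < h → h ≤ S → ∀ j ≤ n, |φ j 0| * h ^ j ≤
      C * (∑ k, |φ 0 (h * nd n k)| + h ^ n * G) := by
  obtain ⟨C, hC, hV⟩ := vander (nd n) (nd_inj n)
  refine ⟨(n.factorial : ℝ) * C * (n+1), by positivity, fun φ S G hd hG h h0 hS j hj => ?_⟩
  have hGn : 0 ≤ G := (abs_nonneg _).trans (hG h ⟨h0.le, hS⟩)
  have key := hV (fun i => φ i 0 * h ^ (i:ℕ) / ((i:ℕ).factorial : ℝ)) ⟨j, by omega⟩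
  have hk : ∀ k, |∑ i : Fin (n+1), φ i 0 * h ^ (i:ℕ) / ((i:ℕ).factorial : ℝ) * nd n k ^ (i:ℕ)|
      ≤ |φ 0 (h * nd n k)| + h ^ n * G := by
    intro k
    have hm : h * nd n k ∈ Icc 0 S := ⟨by have := nd_pos n k; positivity, by
      nlinarith [nd_le n k]⟩
    have := taylor1 n φ S G hd hG _ hm
    have e : ∑ i ∈ Finset.range (n+1), φ i 0 * (h * nd n k) ^ i / (i.factorial : ℝ)
        = ∑ i : Fin (n+1), φ i 0 * h ^ (i:ℕ) / ((i:ℕ).factorial : ℝ) * nd n k ^ (i:ℕ) := by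
      rw [Finset.sum_range]
      exact Finset.sum_congr rfl fun i _ => by rw [mul_pow]; ring
    rw [e] at this
    have h2 : (h * nd n k) ^ n * G ≤ h ^ n * G := by
      refine mul_le_mul_of_nonneg_right (pow_le_pow_left₀ hm.1 ?_ n) hGn
      nlinarith [nd_le n k]
    have h3 := abs_sub_abs_le_abs_sub (∑ i : Fin (n+1), φ i 0 * h ^ (i:ℕ) / ((i:ℕ).factorial : ℝ) * nd n k ^ (i:ℕ)) (φ 0 (h * nd n k))
    rw [abs_sub_comm] at h3
    linarith
  have hsum := Finset.sum_le_sum fun k (_ : k ∈ Finset.univ) => hk k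
  rw [Finset.sum_add_distrib, Finset.sum_const, Finset.card_univ, Fintype.card_fin, nsmul_eq_mul] at hsum
  rw [abs_div, abs_mul, abs_of_pos (pow_pos h0 _), Nat.abs_cast, div_le_iff₀ (by positivity)] at key
  have hfac : (j.factorial : ℝ) ≤ n.factorial := by exact_mod_cast Nat.factorial_le hj
  set X := ∑ k, |φ 0 (h * nd n k)|
  have hX : 0 ≤ X := Finset.sum_nonneg fun _ _ => abs_nonneg _
  have hY : 0 ≤ h ^ n * G := by positivity
  calc |φ j 0| * h ^ j ≤ _ := key
    _ ≤ C * (X + (n+1:ℕ) * (h ^ n * G)) * n.factorial := by gcongr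
    _ ≤ C * ((n+1) * X + (n+1) * (h ^ n * G)) * n.factorial := by
        push_cast; gcongr; nlinarith [hX, (Nat.cast_nonneg n : (0:ℝ) ≤ n)]
    _ = _ := by ring

/-- sup bound of the function by integrals -/
lemma supint (n : ℕ) : ∃ C > (0:ℝ), ∀ (φ : ℕ → ℝ → ℝ) (S G F : ℝ), 0 < S →
    (∀ j, ∀ τ ∈ Icc 0 S, HasDerivAt (φ j) (φ (j+1) τ) τ) →
    (∀ τ ∈ Icc 0 S, |φ n τ - φ n 0| ≤ G) →
    (∫ τ in (0:ℝ)..S, |φ 0 τ|) ≤ F →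
    |φ 0 0| ≤ C * (F / S + S ^ n * G) := by
  obtain ⟨C, hC, hN⟩ := node n
  refine ⟨C * ((n+1)*(n+1)), by positivity, fun φ S G F hS hd hG hF => ?_⟩
  have hGn : 0 ≤ G := (abs_nonneg _).trans (hG S ⟨hS.le, le_rfl⟩)
  have hcont : ContinuousOn (fun τ => |φ 0 τ|) (Icc 0 S) := fun τ hτ =>
    ((hd 0 τ hτ).continuousAt.abs).continuousWithinAt
  have hmem : ∀ k, ∀ h ∈ Icc 0 S, h * nd n k ∈ Icc 0 S := fun k h hh =>
    ⟨mul_nonneg hh.1 (nd_pos n k).le, by nlinarith [nd_le n k, hh.1, hh.2, nd_pos n k]⟩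
  have hc2 : ∀ k, ContinuousOn (fun h => |φ 0 (h * nd n k)|) (Icc 0 S) := fun k =>
    hcont.comp (by fun_prop) (hmem k)
  have hi2 : ∀ k, IntervalIntegrable (fun h => |φ 0 (h * nd n k)|) volume 0 S := fun k =>
    (hc2 k).intervalIntegrable_of_Icc hS.le
  have hi3 : IntervalIntegrable (fun h => ∑ k, |φ 0 (h * nd n k)|) volume 0 S := by
    refine ContinuousOn.intervalIntegrable_of_Icc hS.le ?_
    exact continuousOn_finsetSum _ fun k _ => hc2 k
  have hF0 : 0 ≤ F := le_trans (intervalIntegral.integral_nonneg hS.le fun _ _ => abs_nonneg _) hF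
  have step : ∀ k, (∫ h in (0:ℝ)..S, |φ 0 (h * nd n k)|) ≤ (n+1) * F := by
    intro k
    rw [intervalIntegral.integral_comp_mul_right (fun t => |φ 0 t|) (nd_pos n k).ne', zero_mul, smul_eq_mul]
    have h1 : (∫ x in (0:ℝ)..(S * nd n k), |φ 0 x|) ≤ ∫ x in (0:ℝ)..S, |φ 0 x| := by
      refine intervalIntegral.integral_mono_interval le_rfl (hmem k S ⟨hS.le, le_rfl⟩).1 (hmem k S ⟨hS.le, le_rfl⟩).2
        (Filter.Eventually.of_forall fun _ => abs_nonneg _) (hcont.intervalIntegrable_of_Icc hS.le)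
    have h2 : (nd n k)⁻¹ ≤ n+1 := by
      unfold nd
      rw [inv_div, div_le_iff₀ (by positivity)]
      nlinarith [(Nat.cast_nonneg n : (0:ℝ) ≤ n), (Nat.cast_nonneg (k:ℕ) : (0:ℝ) ≤ ((k:ℕ):ℝ))]
    have h3 : 0 ≤ (nd n k)⁻¹ := inv_nonneg.mpr (nd_pos n k).le
    calc _ ≤ (nd n k)⁻¹ * F := by gcongr; linarith
      _ ≤ _ := by gcongr
  have hIntg : (∫ h in (0:ℝ)..S, |φ 0 0|) ≤ ∫ h in (0:ℝ)..S, C * (∑ k, |φ 0 (h * nd n k)| + S ^ n * G) := by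
    refine intervalIntegral.integral_mono_on_of_le_Ioo hS.le (by simp) ?_ ?_
    · exact IntervalIntegrable.const_mul (IntervalIntegrable.add hi3 (by simp)) _
    · intro h hh
      have := hN φ S G hd hG h hh.1 hh.2.le 0 (Nat.zero_le _)
      simp only [pow_zero, mul_one] at this
      refine this.trans ?_
      have := hh.1.le
      have := hh.2.le
      gcongr
  rw [intervalIntegral.integral_const, intervalIntegral.integral_const_mul,
    intervalIntegral.integral_add hi3 (by simp),
    intervalIntegral.integral_const, intervalIntegral.integral_finsetSum (fun k _ => hi2 k)] at hIntg
  have hs := Finset.sum_le_sum fun k (_ : k ∈ Finset.univ) => step k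
  rw [Finset.sum_const, Finset.card_univ, Fintype.card_fin, nsmul_eq_mul] at hs
  simp only [smul_eq_mul, sub_zero] at hIntg
  push_cast at hs
  have h1 : S * |φ 0 0| ≤ C * ((n+1)*((n+1)*F) + S * (S ^ n * G)) := hIntg.trans (by gcongr)
  have h2 : S * |φ 0 0| ≤ S * (C * ((n+1)*(n+1)) * (F / S + S ^ n * G)) := by
    refine h1.trans ?_
    have e : S * (C * ((n+1)*(n+1)) * (F / S + S ^ n * G)) = C * ((n+1)*((n+1)*F) + (n+1)*(n+1) * (S * (S ^ n * G))) := by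
      field_simp
    rw [e]
    refine mul_le_mul_of_nonneg_left (add_le_add le_rfl ?_) hC.le
    have : 0 ≤ S * (S ^ n * G) := by positivity
    nlinarith [(Nat.cast_nonneg n : (0:ℝ) ≤ n), mul_nonneg (Nat.cast_nonneg n : (0:ℝ) ≤ n) this, mul_nonneg (Nat.cast_nonneg n : (0:ℝ) ≤ n) (mul_nonneg (Nat.cast_nonneg n : (0:ℝ) ≤ n) this)]
  exact le_of_mul_le_mul_left h2 hS

lemma choose_h (L : ℕ) (A G s : ℝ) (hs : 0 < s) (hA : 0 ≤ A) (hG : 0 ≤ G) (h0 : A = 0 → G = 0) :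
    ∃ h, 0 < h ∧ h ≤ s ∧ (L ≠ 0 → h ^ L * G ≤ A) ∧ A / h ^ L ≤ A / s ^ L + G := by
  by_cases hc : s ^ L * G ≤ A
  · exact ⟨s, hs, le_rfl, fun _ => hc, by linarith⟩
  push Not at hc
  have hG' : 0 < G := by
    rcases hG.lt_or_eq with h | h
    · exact h
    · rw [← h] at hc; simp at hc; linarith
  have hA' : 0 < A := by
    rcases hA.lt_or_eq with h | h
    · exact h
    · exact absurd (h0 h.symm) hG'.ne'
  rcases Nat.eq_zero_or_pos L with rfl | hL
  · exact ⟨s, hs, le_rfl, fun h => absurd rfl h, by linarith⟩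
  have hp : ((A / G) ^ ((L:ℝ)⁻¹)) ^ L = A / G := Real.rpow_inv_natCast_pow (by positivity) hL.ne'
  refine ⟨(A/G) ^ ((L:ℝ)⁻¹), by positivity, ?_, ?_, ?_⟩
  · refine le_of_pow_le_pow_left₀ hL.ne' hs.le ?_
    rw [hp, div_le_iff₀ hG']; exact hc.le
  · intro _; rw [hp]; field_simp; exact le_rfl
  · rw [hp]
    have : A / (A/G) = G := by field_simp
    rw [this]; have : 0 ≤ A / s ^ L := by positivity
    linarith

end Stmt18

end

section

namespace Stmt18
open MeasureTheory Set
open scoped ContDiff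

variable {m : ℕ}

/-- smooth on the disk -/
def Smo (r : ℝ) (u : (Fin 2 → ℝ) → (Fin m → ℝ)) : Prop := ContDiffOn ℝ (⊤ : ℕ∞) u (Dr r)

lemma isOpen_Dr (r : ℝ) : IsOpen (Dr r) := by
  unfold Dr
  exact isOpen_lt (by fun_prop) (by fun_prop)

/-- partial derivative, general target -/
noncomputable def pa {E : Type*} [NormedAddCommGroup E] [NormedSpace ℝ E] (i : Fin 2) (f : (Fin 2 → ℝ) → E) :
    (Fin 2 → ℝ) → E := fun x => fderiv ℝ f x (Pi.single i 1)

lemma smooth_pa {E : Type*} [NormedAddCommGroup E] [NormedSpace ℝ E] {U : Set (Fin 2 → ℝ)}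
    (hU : IsOpen U) {f : (Fin 2 → ℝ) → E} (hf : ContDiffOn ℝ (⊤ : ℕ∞) f U) (i : Fin 2) :
    ContDiffOn ℝ (⊤ : ℕ∞) (pa i f) U := by
  have := hf.fderiv_of_isOpen hU (m := (⊤ : ℕ∞)) (by simp)
  exact this.clm_apply contDiffOn_const

lemma pa_congr {E : Type*} [NormedAddCommGroup E] [NormedSpace ℝ E] {U : Set (Fin 2 → ℝ)}
    (hU : IsOpen U) {f g : (Fin 2 → ℝ) → E} (h : ∀ x ∈ U, f x = g x) (i : Fin 2) :
    ∀ x ∈ U, pa i f x = pa i g x := by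
  intro x hx
  unfold pa
  have : f =ᶠ[nhds x] g := by
    filter_upwards [hU.mem_nhds hx] with y hy using h y hy
  rw [this.fderiv_eq]

lemma pa_comm {E : Type*} [NormedAddCommGroup E] [NormedSpace ℝ E] {U : Set (Fin 2 → ℝ)}
    (hU : IsOpen U) {f : (Fin 2 → ℝ) → E} (hf : ContDiffOn ℝ (⊤ : ℕ∞) f U) (i j : Fin 2) :
    ∀ x ∈ U, pa i (pa j f) x = pa j (pa i f) x := by
  intro x hx
  have hfx : ContDiffAt ℝ (⊤ : ℕ∞) f x := hf.contDiffAt (hU.mem_nhds hx)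
  have hs : IsSymmSndFDerivAt ℝ f x := by
    refine hfx.isSymmSndFDerivAt ?_
    simp only [minSmoothness_of_isRCLikeNormedField]
    exact WithTop.coe_le_coe.mpr le_top
  have hd : DifferentiableAt ℝ (fderiv ℝ f) x :=
    (hfx.fderiv_right (m := 1) (WithTop.coe_le_coe.mpr le_top)).differentiableAt (by simp)
  have e : ∀ v w, fderiv ℝ (fun y => fderiv ℝ f y v) x w = fderiv ℝ (fderiv ℝ f) x w v := by
    intro v w
    have h := (hd.hasFDerivAt.clm_apply (hasFDerivAt_const v x)).fderiv
    rw [h]; simp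
  unfold pa
  rw [e, e]
  exact hs _ _

lemma pdIter_succ (u : (Fin 2 → ℝ) → (Fin m → ℝ)) (l : ℕ) (I : Fin (l+1) → Fin 2) :
    (fun x => pdIter u (l+1) x I) = pa (I 0) (fun x => pdIter u l x (Fin.tail I)) := rfl

lemma smooth_pdIter {r : ℝ} {u : (Fin 2 → ℝ) → (Fin m → ℝ)} (hu : Smo r u) (l : ℕ) (I : Fin l → Fin 2) :
    ContDiffOn ℝ (⊤ : ℕ∞) (fun x => pdIter u l x I) (Dr r) := by
  induction l with
  | zero => exact hu
  | succ l ih => rw [pdIter_succ]; exact smooth_pa (isOpen_Dr r) (ih _) _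

/-- canonical derivative -/
noncomputable def qq (u : (Fin 2 → ℝ) → (Fin m → ℝ)) : ℕ → ℕ → (Fin 2 → ℝ) → (Fin m → ℝ)
  | 0, 0 => u
  | 0, (b+1) => pa 1 (qq u 0 b)
  | (a+1), b => pa 0 (qq u a b)

lemma smooth_qq {r : ℝ} {u : (Fin 2 → ℝ) → (Fin m → ℝ)} (hu : Smo r u) (a b : ℕ) :
    ContDiffOn ℝ (⊤ : ℕ∞) (qq u a b) (Dr r) := by
  induction a with
  | zero =>
    induction b with
    | zero => rw [qq]; exact hu
    | succ b ih => simpa [qq] using smooth_pa (isOpen_Dr r) ih 1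
  | succ a ih => simpa [qq] using smooth_pa (isOpen_Dr r) ih 0

lemma pa1_qq {r : ℝ} {u : (Fin 2 → ℝ) → (Fin m → ℝ)} (hu : Smo r u) (a b : ℕ) :
    ∀ x ∈ Dr r, pa 1 (qq u a b) x = qq u a (b+1) x := by
  induction a with
  | zero => intro x _; simp [qq]
  | succ a ih =>
    intro x hx
    simp only [qq]
    rw [pa_comm (isOpen_Dr r) (smooth_qq hu a b) 1 0 x hx]
    exact pa_congr (isOpen_Dr r) ih 0 x hx

lemma pdIter_eq_qq (r : ℝ) (l : ℕ) : ∀ (I : Fin l → Fin 2), ∃ a b, a + b = l ∧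
    ∀ u : (Fin 2 → ℝ) → (Fin m → ℝ), Smo r u → ∀ x ∈ Dr r, pdIter u l x I = qq u a b x := by
  induction l with
  | zero => intro I; exact ⟨0, 0, rfl, fun u _ x _ => by simp [pdIter, qq]⟩
  | succ l ih =>
    intro I
    obtain ⟨a, b, hab, h⟩ := ih (Fin.tail I)
    have h1 : ∀ u : (Fin 2 → ℝ) → (Fin m → ℝ), Smo r u → ∀ x ∈ Dr r,
        pdIter u (l+1) x I = pa (I 0) (qq u a b) x := fun u hu x hx =>
      pa_congr (isOpen_Dr r) (h u hu) (I 0) x hx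
    rcases (by omega : I 0 = 0 ∨ I 0 = 1) with h0 | h0
    · exact ⟨a+1, b, by omega, fun u hu x hx => by rw [h1 u hu x hx, h0]; simp [qq]⟩
    · exact ⟨a, b+1, by omega, fun u hu x hx => by rw [h1 u hu x hx, h0, pa1_qq hu a b x hx]⟩

lemma qq_eq_pdIter (a b : ℕ) : ∀ l, a + b = l → ∃ I : Fin l → Fin 2,
    ∀ u : (Fin 2 → ℝ) → (Fin m → ℝ), qq u a b = fun x => pdIter u l x I := by
  induction a with
  | zero =>
    induction b with
    | zero => rintro l rfl; exact ⟨fun _ => 0, fun u => by simp [qq]; rfl⟩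
    | succ b ih =>
      rintro l rfl
      obtain ⟨I, hI⟩ := ih _ rfl
      refine ⟨Fin.cons 1 I, fun u => ?_⟩
      simp only [qq]
      rw [hI u]; rfl
  | succ a ih =>
    rintro l hl
    obtain ⟨l, rfl⟩ : ∃ l', l = l' + 1 := ⟨a + b, by omega⟩
    obtain ⟨I, hI⟩ := ih l (by omega)
    refine ⟨Fin.cons 0 I, fun u => ?_⟩
    simp only [qq]
    rw [hI u]; rfl

/-- Wnorm integrand -/
noncomputable def VV (u : (Fin 2 → ℝ) → (Fin m → ℝ)) (l : ℕ) (x : Fin 2 → ℝ) : ℝ :=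
  ∑ I : Fin (l+2) → Fin 2, ∑ a, (pdIter u (l+2) x I a) ^ 2

lemma VV_nonneg (u : (Fin 2 → ℝ) → (Fin m → ℝ)) (l x) : 0 ≤ VV u l x := by
  unfold VV; positivity

lemma abs_pdIter_le (u : (Fin 2 → ℝ) → (Fin m → ℝ)) (l x) (I : Fin (l+2) → Fin 2) (a) :
    |pdIter u (l+2) x I a| ≤ Real.sqrt (VV u l x) := by
  apply Real.abs_le_sqrt
  unfold VV
  refine le_trans ?_ (Finset.single_le_sum (f := fun I => ∑ a, (pdIter u (l+2) x I a) ^ 2)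
    (fun _ _ => by positivity) (Finset.mem_univ I))
  exact Finset.single_le_sum (f := fun a => (pdIter u (l+2) x I a) ^ 2)
    (fun _ _ => by positivity) (Finset.mem_univ a)

lemma abs_qq_le (u : (Fin 2 → ℝ) → (Fin m → ℝ)) (l a b : ℕ) (h : a + b = l + 2) (x c) :
    |qq u a b x c| ≤ Real.sqrt (VV u l x) := by
  obtain ⟨I, hI⟩ := qq_eq_pdIter (m := m) a b (l+2) h
  rw [hI u]; exact abs_pdIter_le u l x I c

lemma cont_VV {r : ℝ} {u : (Fin 2 → ℝ) → (Fin m → ℝ)} (hu : Smo r u) (l) :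
    ContinuousOn (VV u l) (Dr r) := by
  unfold VV
  refine continuousOn_finsetSum _ fun I _ => continuousOn_finsetSum _ fun a _ => ?_
  exact (continuousOn_pi.mp (smooth_pdIter hu (l+2) I).continuousOn a).pow 2

/-- directional derivatives along a line -/
noncomputable def ph (u : (Fin 2 → ℝ) → (Fin m → ℝ)) (a b : ℕ) (c : Fin m) (e x : Fin 2 → ℝ) (j : ℕ) (τ : ℝ) : ℝ :=
  ∑ p ∈ Finset.HasAntidiagonal.antidiagonal j, (j.choose p.1 : ℝ) *
    (e 0 ^ p.2 * e 1 ^ p.1 * qq u (a + p.2) (b + p.1) (x + τ • e) c)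

lemma hasDeriv_qq {r : ℝ} {u : (Fin 2 → ℝ) → (Fin m → ℝ)} (hu : Smo r u) (a b c) (e x : Fin 2 → ℝ) (τ : ℝ)
    (h : x + τ • e ∈ Dr r) :
    HasDerivAt (fun t : ℝ => qq u a b (x + t • e) c)
      (e 0 * qq u (a+1) b (x + τ • e) c + e 1 * qq u a (b+1) (x + τ • e) c) τ := by
  have hd : HasFDerivAt (qq u a b) (fderiv ℝ (qq u a b) (x + τ • e)) (x + τ • e) :=
    (((smooth_qq hu a b).contDiffAt ((isOpen_Dr r).mem_nhds h)).differentiableAt (by simp)).hasFDerivAt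
  have hl : HasDerivAt (fun t : ℝ => x + t • e) e τ := by
    simpa using ((hasDerivAt_id τ).smul_const e).const_add x
  have := (hd.comp_hasDerivAt τ hl)
  have h2 := (hasDerivAt_pi.mp this) c
  refine h2.congr_deriv ?_
  have he : e = e 0 • (Pi.single 0 1 : Fin 2 → ℝ) + e 1 • (Pi.single 1 1 : Fin 2 → ℝ) := by
    ext i; fin_cases i <;> simp
  have h3 : fderiv ℝ (qq u a b) (x + τ • e) e = e 0 • pa 0 (qq u a b) (x + τ • e) + e 1 • pa 1 (qq u a b) (x + τ • e) := by
    unfold pa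
    rw [← map_smul, ← map_smul, ← map_add, ← he]
  rw [h3, pa1_qq hu a b _ h]
  simp [qq]

lemma hasDeriv_ph {r : ℝ} {u : (Fin 2 → ℝ) → (Fin m → ℝ)} (hu : Smo r u) (a b c) (e x : Fin 2 → ℝ) (j : ℕ) (τ : ℝ)
    (h : x + τ • e ∈ Dr r) :
    HasDerivAt (ph u a b c e x j) (ph u a b c e x (j+1) τ) τ := by
  unfold ph
  have e1 := Finset.sum_antidiagonal_choose_succ_mul
    (fun p q => e 0 ^ q * e 1 ^ p * qq u (a + q) (b + p) (x + τ • e) c) j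
  rw [e1, ← Finset.sum_add_distrib]
  apply HasDerivAt.fun_sum
  intro p hp
  rw [← Nat.choose_symm_of_eq_add (a := p.1) (b := p.2) (Finset.HasAntidiagonal.mem_antidiagonal.mp hp).symm]
  refine ((((hasDeriv_qq hu (a+p.2) (b+p.1) c e x τ h).const_mul (e 0 ^ p.2 * e 1 ^ p.1)).const_mul _)).congr_deriv ?_
  rw [show a + (p.2+1) = a + p.2 + 1 by ring, show b + (p.1+1) = b + p.1 + 1 by ring]
  ring

lemma abs_ph_le (u : (Fin 2 → ℝ) → (Fin m → ℝ)) (a b c) (e x : Fin 2 → ℝ) (he : ∀ i, |e i| ≤ 1) (hab : a + b = 2) (j : ℕ) (τ : ℝ) :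
    |ph u a b c e x j τ| ≤ (∑ p ∈ Finset.HasAntidiagonal.antidiagonal j, (j.choose p.1 : ℝ)) * Real.sqrt (VV u j (x + τ • e)) := by
  unfold ph
  rw [Finset.sum_mul]
  refine (Finset.abs_sum_le_sum_abs _ _).trans (Finset.sum_le_sum fun p hp => ?_)
  rw [abs_mul, Nat.abs_cast, abs_mul, abs_mul, abs_pow, abs_pow]
  have hp := Finset.HasAntidiagonal.mem_antidiagonal.mp hp
  have h1 : |e 0| ^ p.2 ≤ 1 := pow_le_one₀ (abs_nonneg _) (he 0)
  have h2 : |e 1| ^ p.1 ≤ 1 := pow_le_one₀ (abs_nonneg _) (he 1)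
  have h3 := abs_qq_le u j (a + p.2) (b + p.1) (by omega) (x + τ • e) c
  have h4 : |e 0| ^ p.2 * |e 1| ^ p.1 ≤ 1 := mul_le_one₀ h1 (by positivity) h2
  have h5 : |e 0| ^ p.2 * |e 1| ^ p.1 * |qq u (a + p.2) (b + p.1) (x + τ • e) c| ≤ 1 * Real.sqrt (VV u j (x + τ • e)) := by gcongr
  rw [one_mul] at h5
  gcongr

end Stmt18

end

section

namespace Stmt18
open MeasureTheory Set

variable {m : ℕ}

lemma oneD (n : ℕ) : ∃ K ≥ (1:ℝ), ∀ (φ : ℕ → ℝ → ℝ) (s : ℝ) (g0 g1 : ℝ → ℝ), 0 < s →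
    (∀ j, ∀ τ ∈ Icc 0 (2*s), HasDerivAt (φ j) (φ (j+1) τ) τ) →
    ContinuousOn g0 (Icc 0 (2*s)) → ContinuousOn g1 (Icc 0 (2*s)) →
    (∀ τ ∈ Icc 0 (2*s), |φ 0 τ| ≤ g0 τ) →
    (∀ τ ∈ Icc 0 (2*s), |φ (n+1) τ| ≤ g1 τ) →
    (∀ τ ∈ Icc 0 s, |φ 0 τ| ≤ K * ((∫ τ in (0:ℝ)..(2*s), g0 τ) / s + s ^ n * ∫ τ in (0:ℝ)..(2*s), g1 τ)) ∧
    (∀ A h, 0 < h → h ≤ s → (∀ τ ∈ Icc 0 s, |φ 0 τ| ≤ A) → ∀ j ≤ n,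
      |φ j 0| * h ^ j ≤ K * (A + h ^ n * ∫ τ in (0:ℝ)..(2*s), g1 τ)) := by
  obtain ⟨C1, hC1, h1⟩ := node n
  obtain ⟨C2, hC2, h2⟩ := supint n
  refine ⟨1 + C1 * (n+1) + C2, by nlinarith [mul_nonneg hC1.le (Nat.cast_nonneg n : (0:ℝ) ≤ n)], ?_⟩
  intro φ s g0 g1 hs hd hg0 hg1 hb0 hb1
  set G := ∫ τ in (0:ℝ)..(2*s), g1 τ with hG
  set F := ∫ τ in (0:ℝ)..(2*s), g0 τ with hF
  have h2s : (0:ℝ) ≤ 2*s := by positivity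
  have hi1 : IntervalIntegrable g1 volume 0 (2*s) := hg1.intervalIntegrable_of_Icc h2s
  have hi0 : IntervalIntegrable g0 volume 0 (2*s) := hg0.intervalIntegrable_of_Icc h2s
  have hGn : 0 ≤ G := intervalIntegral.integral_nonneg h2s fun τ hτ => (abs_nonneg _).trans (hb1 τ hτ)
  have hFn : 0 ≤ F := intervalIntegral.integral_nonneg h2s fun τ hτ => (abs_nonneg _).trans (hb0 τ hτ)
  have hcφ : ∀ j, ContinuousOn (φ j) (Icc 0 (2*s)) := fun j τ hτ => (hd j τ hτ).continuousAt.continuousWithinAt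
  -- interval monotonicity for nonneg continuous functions
  have mono : ∀ (ψ g : ℝ → ℝ), ContinuousOn ψ (Icc 0 (2*s)) → ContinuousOn g (Icc 0 (2*s)) →
      (∀ τ ∈ Icc 0 (2*s), |ψ τ| ≤ g τ) → ∀ a b, 0 ≤ a → a ≤ b → b ≤ 2*s →
      (∫ τ in a..b, |ψ τ|) ≤ ∫ τ in (0:ℝ)..(2*s), g τ := by
    intro ψ g hψ hg hb a b ha hab hb2
    have hsub : Icc a b ⊆ Icc 0 (2*s) := Icc_subset_Icc ha hb2
    calc _ ≤ ∫ τ in (0:ℝ)..(2*s), |ψ τ| := by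
          refine intervalIntegral.integral_mono_interval ha hab hb2
            (Filter.Eventually.of_forall fun _ => abs_nonneg _) (hψ.abs.intervalIntegrable_of_Icc h2s)
      _ ≤ _ := intervalIntegral.integral_mono_on h2s (hψ.abs.intervalIntegrable_of_Icc h2s)
          (hg.intervalIntegrable_of_Icc h2s) hb
  have hosc : ∀ a b, 0 ≤ a → a ≤ b → b ≤ 2*s → |φ n b - φ n a| ≤ G := by
    intro a b ha hab hb2
    have hsub : Icc a b ⊆ Icc 0 (2*s) := Icc_subset_Icc ha hb2
    have := intervalIntegral.integral_eq_sub_of_hasDerivAt (a := a) (b := b) (f := φ n) (f' := φ (n+1))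
      (fun τ hτ => hd n τ (hsub (by rwa [uIcc_of_le hab] at hτ)))
      (((hcφ (n+1)).mono hsub).intervalIntegrable_of_Icc hab)
    rw [← this]
    exact (intervalIntegral.abs_integral_le_integral_abs hab).trans (mono _ _ (hcφ _) hg1 hb1 a b ha hab hb2)
  constructor
  · intro τ hτ
    have key := h2 (fun j t => φ j (τ + t)) s G F hs
      (fun j t ht => by
        have := hd j (τ + t) ⟨by linarith [hτ.1, ht.1], by linarith [hτ.2, ht.2]⟩
        simpa using this.comp_const_add τ t)
      (fun t ht => by
        simp only [add_zero]
        exact hosc τ (τ+t) hτ.1 (by linarith [ht.1]) (by linarith [hτ.2, ht.2]))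
      (by
        rw [intervalIntegral.integral_comp_add_left (fun t => |φ 0 t|)]
        exact mono _ _ (hcφ _) hg0 hb0 _ _ (by linarith [hτ.1]) (by linarith) (by linarith [hτ.2]))
    simp only [add_zero] at key
    refine key.trans ?_
    have : 0 ≤ F / s + s ^ n * G := by positivity
    refine mul_le_mul_of_nonneg_right ?_ this
    nlinarith [mul_nonneg hC1.le (Nat.cast_nonneg n : (0:ℝ) ≤ n)]
  · intro A h h0 hhs hA j hj
    have key := h1 φ s G (fun j τ hτ => hd j τ ⟨hτ.1, by linarith [hτ.2]⟩)
      (fun t ht => hosc 0 t le_rfl ht.1 (by linarith [ht.2])) h h0 hhs j hj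
    have hsum : ∑ k, |φ 0 (h * nd n k)| ≤ (n+1) * A := by
      refine (Finset.sum_le_sum fun k _ => hA (h * nd n k) ⟨by have := nd_pos n k; positivity, by
        nlinarith [nd_le n k]⟩).trans ?_
      simp
    have hA0 : 0 ≤ A := (abs_nonneg _).trans (hA 0 ⟨le_rfl, hs.le⟩)
    have hX : 0 ≤ h ^ n * G := by positivity
    calc _ ≤ _ := key
      _ ≤ C1 * ((n+1) * A + (n+1) * (h^n*G)) := by
        refine mul_le_mul_of_nonneg_left (add_le_add hsum ?_) hC1.le
        nlinarith [(Nat.cast_nonneg n : (0:ℝ) ≤ n)]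
      _ = C1 * (n+1) * (A + h^n*G) := by ring
      _ ≤ _ := by
        refine mul_le_mul_of_nonneg_right ?_ (by positivity)
        linarith

/-- directions -/
noncomputable def dir (b : Fin 2) (σ : Bool) (i : ℕ) : Fin 2 → ℝ :=
  fun j => (if σ then 1 else -1) * (if j = b then 1 else 1 / ((i:ℝ)+2))

lemma dir_le (b σ i j) : |dir b σ i j| ≤ 1 := by
  unfold dir
  rw [abs_mul]
  have h1 : |(if σ then (1:ℝ) else -1)| = 1 := by split_ifs <;> simp
  rw [h1, one_mul]
  split_ifs
  · simp
  · rw [abs_of_nonneg (by positivity), div_le_one (by positivity)]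
    have : (0:ℝ) ≤ i := Nat.cast_nonneg i
    linarith

lemma seg {ρ : ℝ} (hρ : 0 < ρ) {x : Fin 2 → ℝ} (hx : x ∈ Dr ρ) : ∃ b σ, ∀ i : ℕ, ∀ τ ∈ Icc 0 (ρ/4),
    x + τ • dir b σ i ∈ Dr ρ := by
  have gen : ∀ (p q t ε τ : ℝ), p^2+q^2 < ρ^2 → |q| ≤ |p| → 0 ≤ t → t ≤ 1/2 → (ε = 1 ∨ ε = -1) → ε * p = -|p| →
      0 ≤ τ → τ ≤ ρ/4 → (p + τ * (ε * 1))^2 + (q + τ * (ε * t))^2 < ρ^2 := by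
    intro p q t ε τ h hqp ht0 ht hε hp hτ0 hτ
    have hε2 : ε^2 = 1 := by rcases hε with h | h <;> rw [h] <;> norm_num
    have hq : ε * q ≤ |p| := by
      rcases hε with h | h <;> rw [h] <;> nlinarith [le_abs_self q, neg_abs_le q]
    have e : (p + τ * (ε * 1))^2 + (q + τ * (ε * t))^2 = p^2+q^2 + 2*τ*(ε*p + t*(ε*q)) + τ^2*(1+t^2) * ε^2 := by ring
    rw [e, hε2, hp]
    have hP := abs_nonneg p
    have h1 : t * (ε*q) ≤ |p|/2 := by nlinarith
    have hp2 : p^2 = |p|^2 := (sq_abs p).symm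
    have hq2 : q^2 ≤ |p|^2 := by rw [← sq_abs q]; exact pow_le_pow_left₀ (abs_nonneg _) hqp 2
    have h2 : τ^2*(1+t^2) ≤ 2*τ^2 := by
      have ht2 : t^2 ≤ 1 := by nlinarith
      nlinarith [mul_nonneg (sq_nonneg τ) (sub_nonneg.mpr ht2)]
    have h3 : 2*τ*(-|p| + t*(ε*q)) ≤ -(τ*|p|) := by nlinarith
    rcases le_total (2*τ) |p| with hc | hc
    · nlinarith
    · nlinarith
  have hx' : x 0 ^ 2 + x 1 ^ 2 < ρ^2 := hx
  have sgn : ∀ p : ℝ, ∃ σ : Bool, (if σ then (1:ℝ) else -1) * p = -|p| := by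
    intro p
    rcases le_total 0 p with h | h
    · exact ⟨false, by simp [abs_of_nonneg h]⟩
    · exact ⟨true, by simp [abs_of_nonpos h]⟩
  have tb : ∀ i : ℕ, (0:ℝ) ≤ 1/((i:ℝ)+2) ∧ 1/((i:ℝ)+2) ≤ 1/2 := fun i => by
    refine ⟨by positivity, ?_⟩
    apply one_div_le_one_div_of_le (by norm_num)
    have : (0:ℝ) ≤ i := Nat.cast_nonneg i
    linarith
  rcases le_total |x 1| |x 0| with h | h
  · obtain ⟨σ, hσ⟩ := sgn (x 0)
    refine ⟨0, σ, fun i τ hτ => ?_⟩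
    have := gen (x 0) (x 1) _ _ τ hx' h (tb i).1 (tb i).2 (by cases σ <;> simp) hσ hτ.1 hτ.2
    simpa [Dr, dir] using this
  · obtain ⟨σ, hσ⟩ := sgn (x 1)
    refine ⟨1, σ, fun i τ hτ => ?_⟩
    have := gen (x 1) (x 0) _ _ τ (by linarith) h (tb i).1 (tb i).2 (by cases σ <;> simp) hσ hτ.1 hτ.2
    rw [add_comm] at this
    simpa [Dr, dir] using this

lemma polar (j : ℕ) : ∃ C ≥ (1:ℝ), ∀ (b : Fin 2) (σ : Bool) (z : ℕ → ℝ) (X : ℝ),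
    (∀ i ≤ j, |∑ p ∈ Finset.HasAntidiagonal.antidiagonal j, (j.choose p.1 : ℝ) *
      (dir b σ i 0 ^ p.2 * dir b σ i 1 ^ p.1 * z p.1)| ≤ X) → ∀ c ≤ j, |z c| ≤ C * X := by
  have hinj : Function.Injective (fun i : Fin (j+1) => 1 / (((i:ℕ):ℝ)+2)) := by
    intro a b h
    simp only [one_div, inv_inj, add_left_inj, Nat.cast_inj] at h
    exact Fin.ext h
  obtain ⟨C, hC, hV⟩ := vander _ hinj
  refine ⟨1 + C * (j+1), by nlinarith [mul_nonneg hC.le (Nat.cast_nonneg j : (0:ℝ) ≤ j)], ?_⟩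
  intro b σ z X hX c hc
  have hX0 : 0 ≤ X := (abs_nonneg _).trans (hX 0 (Nat.zero_le _))
  -- polynomial coefficient extraction
  have gen : ∀ w : ℕ → ℝ, (∀ i ≤ j, |∑ k ∈ Finset.range (j+1), (j.choose k : ℝ) * w k * (1 / ((i:ℝ)+2)) ^ k| ≤ X) →
      ∀ c ≤ j, |w c| ≤ (1 + C * (j+1)) * X := by
    intro w hw c hc
    have := hV (fun k => (j.choose k : ℝ) * w k) ⟨c, by omega⟩
    have h1 : ∑ i : Fin (j+1), |∑ k : Fin (j+1), (j.choose k : ℝ) * w k * (1 / (((i:ℕ):ℝ)+2)) ^ (k:ℕ)| ≤ (j+1) * X := by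
      refine (Finset.sum_le_sum fun i _ => ?_).trans (b := ∑ i : Fin (j+1), X) (by simp)
      rw [← Finset.sum_range (fun k => (j.choose k : ℝ) * w k * (1 / (((i:ℕ):ℝ)+2)) ^ k)]
      exact hw i (by omega)
    have h2 : |w c| ≤ |(j.choose c : ℝ) * w c| := by
      rw [abs_mul, Nat.abs_cast]
      have : (1:ℝ) ≤ j.choose c := by exact_mod_cast Nat.choose_pos hc
      nlinarith [abs_nonneg (w c)]
    calc |w c| ≤ _ := h2
      _ ≤ _ := this
      _ ≤ C * ((j+1) * X) := by gcongr
      _ ≤ _ := by nlinarith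
  have hσ : ∀ k : ℕ, |(if σ then (1:ℝ) else -1) ^ k| = 1 := by intro k; cases σ <;> simp
  rcases (by omega : b = 0 ∨ b = 1) with rfl | rfl
  · refine gen z (fun i hi => ?_) c hc
    have := hX i hi
    rw [Finset.Nat.sum_antidiagonal_eq_sum_range_succ_mk] at this
    have e : ∑ k ∈ Finset.range j.succ, (j.choose k : ℝ) * (dir 0 σ i 0 ^ (j-k) * dir 0 σ i 1 ^ k * z k)
        = (if σ then (1:ℝ) else -1) ^ j * ∑ k ∈ Finset.range (j+1), (j.choose k : ℝ) * z k * (1 / ((i:ℝ)+2)) ^ k := by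
      rw [Finset.mul_sum]
      refine Finset.sum_congr rfl fun k hk => ?_
      have hk : k ≤ j := by simpa [Nat.lt_succ_iff] using hk
      have e0 : dir 0 σ i 0 = (if σ then (1:ℝ) else -1) := by simp [dir]
      have e1 : dir 0 σ i 1 = (if σ then (1:ℝ) else -1) * (1 / ((i:ℝ)+2)) := by simp [dir]
      rw [e0, e1, mul_pow]
      have : (if σ then (1:ℝ) else -1) ^ j = (if σ then (1:ℝ) else -1) ^ (j-k) * (if σ then (1:ℝ) else -1) ^ k := by
        rw [← pow_add]; congr 1; omega
      rw [this]; ring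
    rw [e, abs_mul, hσ, one_mul] at this
    exact this
  · have := gen (fun k => z (j-k)) (fun i hi => ?_) (j-c) (by omega)
    · simpa [Nat.sub_sub_self hc] using this
    have := hX i hi
    rw [Finset.Nat.sum_antidiagonal_eq_sum_range_succ_mk] at this
    have e : ∑ k ∈ Finset.range j.succ, (j.choose k : ℝ) * (dir 1 σ i 0 ^ (j-k) * dir 1 σ i 1 ^ k * z k)
        = (if σ then (1:ℝ) else -1) ^ j * ∑ k ∈ Finset.range (j+1), (j.choose k : ℝ) * z (j-k) * (1 / ((i:ℝ)+2)) ^ k := by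
      rw [← Finset.sum_range_reflect (fun k => (j.choose k : ℝ) * z (j-k) * (1 / ((i:ℝ)+2)) ^ k), Finset.mul_sum]
      refine Finset.sum_congr rfl fun k hk => ?_
      have hk : k ≤ j := by simpa [Nat.lt_succ_iff] using hk
      have e0 : dir 1 σ i 1 = (if σ then (1:ℝ) else -1) := by simp [dir]
      have e1 : dir 1 σ i 0 = (if σ then (1:ℝ) else -1) * (1 / ((i:ℝ)+2)) := by simp [dir]
      rw [e0, e1, mul_pow]
      have : (if σ then (1:ℝ) else -1) ^ j = (if σ then (1:ℝ) else -1) ^ (j-k) * (if σ then (1:ℝ) else -1) ^ k := by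
        rw [← pow_add]; congr 1; omega
      rw [this, show j + 1 - 1 - k = j - k by omega, Nat.choose_symm hk, Nat.sub_sub_self hk]; ring
    rw [e, abs_mul, hσ, one_mul] at this
    exact this

end Stmt18

end

section

namespace Stmt18
open MeasureTheory Set

variable {m : ℕ}

/-- line integral of the square root of VV -/
noncomputable def LI (u : (Fin 2 → ℝ) → (Fin m → ℝ)) (l : ℕ) (x e : Fin 2 → ℝ) (s : ℝ) : ℝ :=
  ∫ τ in (0:ℝ)..(2*s), Real.sqrt (VV u l (x + τ • e))

lemma LI_nonneg (u : (Fin 2 → ℝ) → (Fin m → ℝ)) (l x e) {s : ℝ} (hs : 0 < s) : 0 ≤ LI u l x e s :=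
  intervalIntegral.integral_nonneg (by positivity) fun _ _ => Real.sqrt_nonneg _

set_option maxHeartbeats 1600000 in
lemma main_scale (n : ℕ) : ∃ K ≥ (1:ℝ), ∀ (r ρ s β : ℝ) (u : (Fin 2 → ℝ) → (Fin m → ℝ)), Smo r u →
    0 < β → (∀ x ∈ Dr r, VV u 0 x ≤ β ^ 2) → 0 < ρ → Dr ρ ⊆ Dr r → 0 < s → 2 * s ≤ ρ / 4 →
    ∀ x ∈ Dr ρ, ∃ b σ, (∀ i : ℕ, ∀ τ ∈ Icc 0 (2*s), x + τ • dir b σ i ∈ Dr ρ) ∧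
      ∃ A h, 0 ≤ A ∧ A ≤ β ∧ 0 < h ∧ h ≤ s ∧
        A / h ^ n ≤ K * ∑ i ∈ Finset.range (n+1), (LI u (n+1) x (dir b σ i) s + LI u 0 x (dir b σ i) s / s ^ (n+1)) ∧
        ∀ j ≤ n, ∀ a b', a + b' = j + 2 → ∀ c, |qq u a b' x c| ≤ K * (A / h ^ j) := by
  obtain ⟨K1, hK1, H1⟩ := oneD n
  choose Cp hCp Hp using polar
  set Cb : ℝ := ∑ p ∈ Finset.HasAntidiagonal.antidiagonal (n+1), ((n+1).choose p.1 : ℝ) with hCb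
  have hCb0 : 0 ≤ Cb := by positivity
  set CP : ℝ := ∑ j ∈ Finset.range (n+1), Cp j with hCP
  have hCPj : ∀ j ≤ n, Cp j ≤ CP := fun j hj =>
    Finset.single_le_sum (f := Cp) (fun j _ => by linarith [hCp j]) (Finset.mem_range.mpr (by omega))
  have hCP1 : 1 ≤ CP := (hCp 0).trans (hCPj 0 (Nat.zero_le _))
  set K2 := K1 * (1 + Cb) with hK2
  have hK2' : 1 ≤ K2 := by nlinarith
  refine ⟨K2 + 1 + CP * K2, by nlinarith, ?_⟩
  intro r ρ s β u hu hβ hV hρ hsub hs hsρ x hx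
  obtain ⟨b, σ, hseg⟩ := seg hρ hx
  refine ⟨b, σ, fun i τ hτ => hseg i τ ⟨hτ.1, hτ.2.trans hsρ⟩, ?_⟩
  have hsg : ∀ i : ℕ, ∀ τ ∈ Icc 0 (2*s), x + τ • dir b σ i ∈ Dr r := fun i τ hτ =>
    hsub (hseg i τ ⟨hτ.1, hτ.2.trans hsρ⟩)
  set G := ∑ i ∈ Finset.range (n+1), LI u (n+1) x (dir b σ i) s with hG
  set F := ∑ i ∈ Finset.range (n+1), LI u 0 x (dir b σ i) s with hF
  have hG0 : 0 ≤ G := Finset.sum_nonneg fun i _ => LI_nonneg _ _ _ _ hs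
  have hF0 : 0 ≤ F := Finset.sum_nonneg fun i _ => LI_nonneg _ _ _ _ hs
  have hGi : ∀ i ≤ n, LI u (n+1) x (dir b σ i) s ≤ G := fun i hi =>
    Finset.single_le_sum (f := fun i => LI u (n+1) x (dir b σ i) s) (fun i _ => LI_nonneg _ _ _ _ hs) (Finset.mem_range.mpr (by omega))
  have hFi : ∀ i ≤ n, LI u 0 x (dir b σ i) s ≤ F := fun i hi =>
    Finset.single_le_sum (f := fun i => LI u 0 x (dir b σ i) s) (fun i _ => LI_nonneg _ _ _ _ hs) (Finset.mem_range.mpr (by omega))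
  set A := min β (K2 * (F / s + s ^ n * G)) with hA
  have hcont : ∀ l i, ContinuousOn (fun τ : ℝ => Real.sqrt (VV u l (x + τ • dir b σ i))) (Icc 0 (2*s)) := by
    intro l i
    refine Real.continuous_sqrt.comp_continuousOn ((cont_VV hu l).comp (by fun_prop) (hsg i))
  have hA0 : 0 ≤ A := le_min hβ.le (by positivity)
  have hAβ : A ≤ β := min_le_left _ _
  obtain ⟨h, h0, hhs, hhG, hhA⟩ := choose_h n A G s hs hA0 hG0 (by
    intro hz
    rcases min_choice β (K2 * (F / s + s ^ n * G)) with hm | hm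
    · rw [← hA, hz] at hm; linarith
    · rw [← hA, hz] at hm
      have h1 : F / s + s ^ n * G = 0 := by
        rcases mul_eq_zero.mp hm.symm with h | h
        · linarith
        · exact h
      have h2 : 0 ≤ F / s := by positivity
      have h3 : 0 ≤ s ^ n * G := by positivity
      have h4 : s ^ n * G = 0 := by linarith
      rcases mul_eq_zero.mp h4 with h | h
      · exact absurd h (by positivity)
      · exact h)
  -- one-dimensional estimates
  have one : ∀ i ≤ n, ∀ a0 b0, a0 + b0 = 2 → ∀ c, ∀ j ≤ n, |ph u a0 b0 c (dir b σ i) x j 0| ≤ K2 * (A / h ^ j) := by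
    intro i hi a0 b0 hab c
    have e0 : ∀ τ, ph u a0 b0 c (dir b σ i) x 0 τ = qq u a0 b0 (x + τ • dir b σ i) c := by
      intro τ; simp [ph]
    obtain ⟨P1, P2⟩ := H1 (fun j => ph u a0 b0 c (dir b σ i) x j) s
      (fun τ => Real.sqrt (VV u 0 (x + τ • dir b σ i)))
      (fun τ => Cb * Real.sqrt (VV u (n+1) (x + τ • dir b σ i))) hs
      (fun j τ hτ => hasDeriv_ph hu a0 b0 c _ x j τ (hsg i τ hτ))
      (hcont 0 i) ((hcont (n+1) i).const_mul Cb)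
      (fun τ hτ => by rw [e0]; exact abs_qq_le u 0 a0 b0 hab _ c)
      (fun τ hτ => abs_ph_le u a0 b0 c _ x (dir_le b σ i) hab (n+1) τ)
    rw [intervalIntegral.integral_const_mul] at P1 P2
    change ∀ τ ∈ Icc 0 s, _ ≤ K1 * (LI u 0 x (dir b σ i) s / s + s ^ n * (Cb * LI u (n+1) x (dir b σ i) s)) at P1
    have hsupA : ∀ τ ∈ Icc 0 s, |ph u a0 b0 c (dir b σ i) x 0 τ| ≤ A := by
      intro τ hτ
      refine le_min ?_ ((P1 τ hτ).trans ?_)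
      · rw [e0]
        refine (abs_qq_le u 0 a0 b0 hab _ c).trans ?_
        rw [Real.sqrt_le_left hβ.le]
        exact hV _ (hsg i τ ⟨hτ.1, by linarith [hτ.2]⟩)
      · have g1 : LI u 0 x (dir b σ i) s / s + s ^ n * (Cb * LI u (n+1) x (dir b σ i) s) ≤ F / s + s ^ n * (Cb * G) := by
          have := hGi i hi
          have := hFi i hi
          gcongr
        have g2 : F / s + s ^ n * (Cb * G) ≤ (1 + Cb) * (F / s + s ^ n * G) := by
          have h2 : 0 ≤ F / s := by positivity
          have h3 : 0 ≤ s ^ n * G := by positivity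
          nlinarith
        rw [hK2, mul_assoc]
        exact mul_le_mul_of_nonneg_left (g1.trans g2) (by linarith)
    intro j hj
    have hA1 : A ≤ K2 * A := by nlinarith
    by_cases hn : n = 0
    · subst hn
      obtain rfl : j = 0 := by omega
      have := hsupA 0 ⟨le_rfl, hs.le⟩
      simpa using this.trans hA1
    · have := P2 A h h0 hhs hsupA j hj
      rw [← mul_div_assoc, le_div_iff₀ (pow_pos h0 _)]
      refine this.trans ?_
      change K1 * (A + h ^ n * (Cb * LI u (n+1) x (dir b σ i) s)) ≤ _
      rw [hK2, mul_assoc]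
      refine mul_le_mul_of_nonneg_left ?_ (by linarith)
      have g1 : h ^ n * (Cb * LI u (n+1) x (dir b σ i) s) ≤ h ^ n * (Cb * G) := by
        have := hGi i hi
        gcongr
      have g2 := mul_le_mul_of_nonneg_left (hhG hn) hCb0
      nlinarith
  refine ⟨A, h, hA0, hAβ, h0, hhs, ?_, ?_⟩
  · have e : ∑ i ∈ Finset.range (n+1), (LI u (n+1) x (dir b σ i) s + LI u 0 x (dir b σ i) s / s ^ (n+1)) = G + F / s ^ (n+1) := by
      rw [Finset.sum_add_distrib, Finset.sum_div]
    rw [e]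
    have h1 : A / s ^ n ≤ K2 * (G + F / s ^ (n+1)) := by
      rw [div_le_iff₀ (by positivity)]
      refine (min_le_right _ _).trans (le_of_eq ?_)
      rw [pow_succ]
      field_simp
      ring
    have h2 : 0 ≤ F / s ^ (n+1) := by positivity
    have h3 : 0 ≤ CP * K2 * (G + F / s ^ (n+1)) := by positivity
    nlinarith
  · intro j hj a b' hab c
    obtain ⟨a0, b0, p1, p2, h1, h2, h3, h4⟩ : ∃ a0 b0 p1 p2, a0 + b0 = 2 ∧ p1 + p2 = j ∧ a = a0 + p2 ∧ b' = b0 + p1 := by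
      by_cases ha : 2 ≤ a
      · exact ⟨2, 0, b', a - 2, by omega, by omega, by omega, by omega⟩
      · exact ⟨a, 2 - a, b' - (2 - a), 0, by omega, by omega, by omega, by omega⟩
    have := Hp j b σ (fun k => qq u (a0 + (j - k)) (b0 + k) x c) (K2 * (A / h ^ j)) (fun i hi => by
      have := one i (by omega) a0 b0 h1 c j hj
      unfold ph at this
      refine le_trans (le_of_eq ?_) this
      congr 1
      refine Finset.sum_congr rfl fun p hp => ?_
      have hp := Finset.HasAntidiagonal.mem_antidiagonal.mp hp
      rw [show j - p.1 = p.2 by omega, zero_smul, add_zero]) p1 (by omega)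
    rw [show j - p1 = p2 by omega, ← h3, ← h4] at this
    have hq : 0 ≤ A / h ^ j := by positivity
    calc _ ≤ _ := this
      _ ≤ CP * (K2 * (A / h ^ j)) := by gcongr; exact hCPj j hj
      _ = (CP * K2) * (A / h ^ j) := by ring
      _ ≤ _ := mul_le_mul_of_nonneg_right (by linarith) hq

end Stmt18

end

section

namespace Stmt18
open MeasureTheory Set

variable {m : ℕ}

/-- Operators sending a map to a function -/
abbrev Op (m : ℕ) := ((Fin 2 → ℝ) → (Fin m → ℝ)) → (Fin 2 → ℝ) → ℝ

/-- Differential polynomials of weight `w` with at least `n` factors of order at least two. -/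
inductive Sy (r : ℝ) : ℕ → ℕ → Op m → Prop
  | zero (w n : ℕ) : Sy r w n (fun _ _ => 0)
  | const (c : ℝ) : Sy r 0 0 (fun _ _ => c)
  | d1 (I : Fin 1 → Fin 2) (a : Fin m) : Sy r 0 0 (fun u x => pdIter u 1 x I a)
  | dd (j : ℕ) (I : Fin (j+2) → Fin 2) (a : Fin m) : Sy r (j+1) 1 (fun u x => pdIter u (j+2) x I a)
  | add {w n : ℕ} {E1 E2 : Op m} : Sy r w n E1 → Sy r w n E2 → Sy r w n (fun u x => E1 u x + E2 u x)
  | mul {w1 n1 w2 n2 : ℕ} {E1 E2 : Op m} : Sy r w1 n1 E1 → Sy r w2 n2 E2 →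
      Sy r (w1+w2) (n1+n2) (fun u x => E1 u x * E2 u x)
  | inv {E : Op m} : Sy r 0 0 E → (∀ u, Smo r u → ∀ x ∈ Dr r, 1 ≤ E u x) → Sy r 0 0 (fun u x => (E u x)⁻¹)
  | weak {w n : ℕ} {E : Op m} : Sy r w (n+1) E → Sy r w n E
  | congr {w n : ℕ} {E1 E2 : Op m} : Sy r w n E1 → (∀ u, Smo r u → ∀ x ∈ Dr r, E2 u x = E1 u x) → Sy r w n E2

namespace Sy
variable {r : ℝ}

lemma weak_le {w n n' : ℕ} {E : Op m} (h : Sy r w n E) (hn : n' ≤ n) : Sy r w n' E := by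
  induction n, hn using Nat.le_induction with
  | base => exact h
  | succ k _ ih => exact ih h.weak

lemma mul' {w1 n1 w2 n2 w n : ℕ} {E1 E2 : Op m} (h1 : Sy r w1 n1 E1) (h2 : Sy r w2 n2 E2)
    (hw : w = w1 + w2) (hn : n ≤ n1 + n2) : Sy r w n (fun u x => E1 u x * E2 u x) := by
  subst hw; exact (h1.mul h2).weak_le hn

lemma sum {ι : Type*} {w n : ℕ} (s : Finset ι) {E : ι → Op m} (h : ∀ k ∈ s, Sy r w n (E k)) :
    Sy r w n (fun u x => ∑ k ∈ s, E k u x) := by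
  classical
  induction s using Finset.induction_on with
  | empty => simpa using Sy.zero w n
  | insert a s ha ih =>
    refine ((h a (by simp)).add (ih fun k hk => h k (by simp [hk]))).congr fun u _ x _ => ?_
    rw [Finset.sum_insert ha]

lemma neg {w n : ℕ} {E : Op m} (h : Sy r w n E) : Sy r w n (fun u x => - E u x) :=
  (mul' (Sy.const (-1)) h (by simp) (by simp)).congr fun u _ x _ => by simp

lemma sub {w n : ℕ} {E1 E2 : Op m} (h1 : Sy r w n E1) (h2 : Sy r w n E2) :
    Sy r w n (fun u x => E1 u x - E2 u x) :=
  (h1.add h2.neg).congr fun u _ x _ => by ring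

lemma smooth {w n : ℕ} {E : Op m} (h : Sy r w n E) {u : (Fin 2 → ℝ) → (Fin m → ℝ)} (hu : Smo r u) :
    ContDiffOn ℝ (⊤ : ℕ∞) (E u) (Dr r) := by
  induction h with
  | zero w n => exact contDiffOn_const
  | const c => exact contDiffOn_const
  | d1 I a => exact (contDiffOn_pi.mp (smooth_pdIter hu 1 I) a)
  | dd j I a => exact (contDiffOn_pi.mp (smooth_pdIter hu (j+2) I) a)
  | add _ _ i1 i2 => exact i1.add i2
  | mul _ _ i1 i2 => exact i1.mul i2
  | inv _ h1 i => exact i.inv fun x hx => by have := h1 u hu x hx; positivity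
  | weak _ i => exact i
  | congr _ h1 i => exact i.congr fun x hx => h1 u hu x hx

lemma diffAt {w n : ℕ} {E : Op m} (h : Sy r w n E) {u : (Fin 2 → ℝ) → (Fin m → ℝ)} (hu : Smo r u)
    {x} (hx : x ∈ Dr r) : DifferentiableAt ℝ (E u) x :=
  ((h.smooth hu).contDiffAt ((isOpen_Dr r).mem_nhds hx)).differentiableAt (by simp)

end Sy

lemma pa_apply {ι : Type*} [Fintype ι] {f : (Fin 2 → ℝ) → (ι → ℝ)} {x} (hf : DifferentiableAt ℝ f x) (i : Fin 2) (a : ι) :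
    pa i f x a = pa i (fun y => f y a) x := by
  have h1 : HasFDerivAt (fun y => f y a) ((ContinuousLinearMap.proj a).comp (fderiv ℝ f x)) x :=
    hasFDerivAt_pi'.mp hf.hasFDerivAt a
  unfold pa
  rw [h1.fderiv]
  rfl

lemma pa_pdIter {r : ℝ} {u : (Fin 2 → ℝ) → (Fin m → ℝ)} (hu : Smo r u) {x} (hx : x ∈ Dr r) (l : ℕ) (I : Fin l → Fin 2)
    (i : Fin 2) (a : Fin m) :
    pa i (fun y => pdIter u l y I a) x = pdIter u (l+1) x (Fin.cons i I) a := by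
  rw [← pa_apply (f := fun y => pdIter u l y I) (((smooth_pdIter hu l I).contDiffAt ((isOpen_Dr r).mem_nhds hx)).differentiableAt (by simp))]
  rfl

lemma pa_add {f g : (Fin 2 → ℝ) → ℝ} {x} (hf : DifferentiableAt ℝ f x) (hg : DifferentiableAt ℝ g x) (i : Fin 2) :
    pa i (fun y => f y + g y) x = pa i f x + pa i g x := by
  unfold pa; rw [fderiv_fun_add hf hg]; rfl

lemma pa_mul {f g : (Fin 2 → ℝ) → ℝ} {x} (hf : DifferentiableAt ℝ f x) (hg : DifferentiableAt ℝ g x) (i : Fin 2) :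
    pa i (fun y => f y * g y) x = pa i f x * g x + f x * pa i g x := by
  unfold pa; rw [fderiv_fun_mul hf hg]; simp; ring

lemma pa_sum {ι : Type*} (s : Finset ι) {f : ι → (Fin 2 → ℝ) → ℝ} {x} (hf : ∀ k ∈ s, DifferentiableAt ℝ (f k) x) (i : Fin 2) :
    pa i (fun y => ∑ k ∈ s, f k y) x = ∑ k ∈ s, pa i (f k) x := by
  unfold pa; rw [fderiv_fun_sum hf]; simp

lemma pa_inv {f : (Fin 2 → ℝ) → ℝ} {x} (hf : DifferentiableAt ℝ f x) (h0 : f x ≠ 0) (i : Fin 2) :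
    pa i (fun y => (f y)⁻¹) x = - ((f x)⁻¹ * ((f x)⁻¹ * pa i f x)) := by
  unfold pa
  have h1 : HasFDerivAt (fun y => (f y)⁻¹) ((-(f x ^ 2)⁻¹) • fderiv ℝ f x) x :=
    (hasDerivAt_inv h0).comp_hasFDerivAt x hf.hasFDerivAt
  rw [h1.fderiv]; simp; field_simp

lemma Sy.deriv {r : ℝ} {w n : ℕ} {E : Op m} (h : Sy r w n E) (i : Fin 2) :
    Sy r (w+1) (max n 1) (fun u x => pa i (E u) x) := by
  induction h with
  | zero w n => exact (Sy.zero _ _).congr fun u _ x _ => by simp [pa]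
  | const c => exact (Sy.zero _ _).congr fun u _ x _ => by simp [pa]
  | d1 I a => exact (Sy.dd 0 (Fin.cons i I) a).congr fun u hu x hx => pa_pdIter hu hx 1 I i a
  | dd j I a => exact (Sy.dd (j+1) (Fin.cons i I) a).congr fun u hu x hx => pa_pdIter hu hx (j+2) I i a
  | add h1 h2 i1 i2 =>
    exact (i1.add i2).congr fun u hu x hx => pa_add (h1.diffAt hu hx) (h2.diffAt hu hx) i
  | mul h1 h2 i1 i2 =>
    exact ((i1.mul' h2 (by ring) (by omega)).add (h1.mul' i2 (by ring) (by omega))).congr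
      fun u hu x hx => pa_mul (h1.diffAt hu hx) (h2.diffAt hu hx) i
  | inv h1 hg i1 =>
    exact ((h1.inv hg).mul' ((h1.inv hg).mul' i1 (w := 1) (n := 1) (by ring) (by omega)) (w := 1) (n := 1) (by ring) (by omega)).neg.congr
      fun u hu x hx => pa_inv (h1.diffAt hu hx) (by have := hg u hu x hx; positivity) i
  | weak _ i1 => exact i1.weak_le (by omega)
  | congr h1 hc i1 => exact i1.congr fun u hu x hx => pa_congr (isOpen_Dr r) (hc u hu) i x hx

lemma Sy.zero_or {r : ℝ} {w n : ℕ} {E : Op m} (h : Sy r w n E) :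
    (∀ u, Smo r u → ∀ x ∈ Dr r, E u x = 0) ∨ n ≤ w := by
  induction h with
  | zero w n => left; intros; rfl
  | const c => right; omega
  | d1 I a => right; omega
  | dd j I a => right; omega
  | add h1 h2 i1 i2 =>
    rcases i1 with i1 | i1
    · rcases i2 with i2 | i2
      · left; intro u hu x hx; beta_reduce; rw [i1 u hu x hx, i2 u hu x hx, add_zero]
      · right; exact i2
    · right; exact i1
  | mul h1 h2 i1 i2 =>
    rcases i1 with i1 | i1
    · left; intro u hu x hx; beta_reduce; rw [i1 u hu x hx, zero_mul]
    · rcases i2 with i2 | i2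
      · left; intro u hu x hx; beta_reduce; rw [i2 u hu x hx, mul_zero]
      · right; omega
  | inv _ _ _ => right; omega
  | weak _ i1 => rcases i1 with i1 | i1
                 · left; exact i1
                 · right; omega
  | congr h1 hc i1 => rcases i1 with i1 | i1
                      · left; intro u hu x hx; beta_reduce; rw [hc u hu x hx, i1 u hu x hx]
                      · right; exact i1

lemma Sy.bound {r : ℝ} {w n : ℕ} {E : Op m} (h : Sy r w n E) (α β K : ℝ) (hα : 0 < α) (hβ : 0 < β) (hK : 0 < K) :
    ∃ C ≥ (0:ℝ), ∀ u, Smo r u → ∀ x ∈ Dr r, (∀ I a, |pdIter u 1 x I a| ≤ α) →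
      ∀ A h, 0 ≤ A → A ≤ β → 0 < h → h ≤ 1 →
      (∀ j, j + max n 1 ≤ w → ∀ I a, |pdIter u (j+2) x I a| ≤ K * (A / h ^ j)) →
      |E u x| ≤ C * ((A * h) ^ n / h ^ w) := by
  induction h with
  | zero w n => exact ⟨0, le_rfl, by intros; simp⟩
  | const c => exact ⟨|c|, abs_nonneg _, by intros; simp⟩
  | d1 I a => exact ⟨α, hα.le, fun u hu x hx h1 A h _ _ _ _ _ => by simpa using h1 I a⟩
  | dd j I a =>
    refine ⟨K, hK.le, fun u hu x hx h1 A h hA _ h0 _ hj => ?_⟩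
    refine (hj j (by simp) I a).trans (le_of_eq ?_)
    rw [pow_one, pow_succ]; field_simp
  | add h1 h2 i1 i2 =>
    obtain ⟨C1, hC1, H1⟩ := i1
    obtain ⟨C2, hC2, H2⟩ := i2
    refine ⟨C1 + C2, by positivity, fun u hu x hx h1 A h hA hAβ h0 hh1 hj => ?_⟩
    rw [add_mul]
    exact (abs_add_le _ _).trans (add_le_add (H1 u hu x hx h1 A h hA hAβ h0 hh1 hj) (H2 u hu x hx h1 A h hA hAβ h0 hh1 hj))
  | @mul w1 n1 w2 n2 E1 E2 h1 h2 i1 i2 =>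
    obtain ⟨C1, hC1, H1⟩ := i1
    obtain ⟨C2, hC2, H2⟩ := i2
    refine ⟨C1 * C2, by positivity, fun u hu x hx h1' A h hA hAβ h0 hh1 hj => ?_⟩
    have hpos : 0 ≤ C1 * C2 * ((A*h)^(n1+n2) / h^(w1+w2)) := by positivity
    rcases h1.zero_or with z | z
    · beta_reduce; rw [z u hu x hx]; simpa using hpos
    rcases h2.zero_or with z2 | z2
    · beta_reduce; rw [z2 u hu x hx]; simpa using hpos
    have a1 := H1 u hu x hx h1' A h hA hAβ h0 hh1 (fun j hjj => hj j (by omega))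
    have a2 := H2 u hu x hx h1' A h hA hAβ h0 hh1 (fun j hjj => hj j (by omega))
    rw [abs_mul]
    calc _ ≤ (C1 * ((A*h)^n1 / h^w1)) * (C2 * ((A*h)^n2 / h^w2)) := by gcongr
      _ = _ := by rw [pow_add, pow_add]; field_simp
  | inv _ hg i1 =>
    refine ⟨1, zero_le_one, fun u hu x hx h1 A h _ _ _ _ _ => ?_⟩
    have := hg u hu x hx
    rw [abs_of_nonneg (by positivity)]
    simpa using inv_le_one_of_one_le₀ this
  | @weak w n E _ i1 =>
    obtain ⟨C1, hC1, H1⟩ := i1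
    refine ⟨C1 * β, by positivity, fun u hu x hx h1 A h hA hAβ h0 hh1 hj => ?_⟩
    refine (H1 u hu x hx h1 A h hA hAβ h0 hh1 (fun j hjj => hj j (by omega))).trans ?_
    rw [pow_succ, mul_assoc C1, mul_comm _ (A*h), mul_div_assoc]
    have : A * h ≤ β := by nlinarith
    gcongr
  | congr h1 hc i1 =>
    obtain ⟨C1, hC1, H1⟩ := i1
    refine ⟨C1, hC1, fun u hu x hx h1 A h hA hAβ h0 hh1 hj => ?_⟩
    rw [hc u hu x hx]
    exact H1 u hu x hx h1 A h hA hAβ h0 hh1 hj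

end Stmt18

end

section

namespace Stmt18
open MeasureTheory Set

variable {m : ℕ}

lemma pd_apply {f : (Fin 2 → ℝ) → (Fin 2 ⊕ Fin m → ℝ)} {x} (hf : DifferentiableAt ℝ f x) (i : Fin 2) (B) :
    pd f i x B = pa i (fun y => f y B) x := pa_apply hf i B

lemma diff_u {r : ℝ} {u : (Fin 2 → ℝ) → (Fin m → ℝ)} (hu : Smo r u) {x} (hx : x ∈ Dr r) : DifferentiableAt ℝ u x :=
  (ContDiffOn.contDiffAt hu ((isOpen_Dr r).mem_nhds hx)).differentiableAt (by simp)

lemma diff_gr {r : ℝ} {u : (Fin 2 → ℝ) → (Fin m → ℝ)} (hu : Smo r u) {x} (hx : x ∈ Dr r) : DifferentiableAt ℝ (gr u) x := by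
  rw [differentiableAt_pi]
  rintro (i | a)
  · simp only [gr, Sum.elim_inl]; fun_prop
  · simp only [gr, Sum.elim_inr]; exact differentiableAt_pi.mp (diff_u hu hx) a

lemma pd_gr_inl {r : ℝ} {u : (Fin 2 → ℝ) → (Fin m → ℝ)} (hu : Smo r u) {x} (hx : x ∈ Dr r) (k i : Fin 2) :
    pd (gr u) k x (Sum.inl i) = if i = k then 1 else 0 := by
  rw [pd_apply (diff_gr hu hx)]
  simp only [gr, Sum.elim_inl, pa]
  have : HasFDerivAt (fun y : Fin 2 → ℝ => y i) (ContinuousLinearMap.proj (R := ℝ) (φ := fun _ : Fin 2 => ℝ) i) x :=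
    (ContinuousLinearMap.proj (R := ℝ) (φ := fun _ : Fin 2 => ℝ) i).hasFDerivAt
  rw [this.fderiv]
  simp [Pi.single_apply]

lemma pd_gr_inr {r : ℝ} {u : (Fin 2 → ℝ) → (Fin m → ℝ)} (hu : Smo r u) {x} (hx : x ∈ Dr r) (k : Fin 2) (a : Fin m) :
    pd (gr u) k x (Sum.inr a) = pdIter u 1 x (fun _ => k) a := by
  rw [pd_apply (diff_gr hu hx)]
  simp only [gr, Sum.elim_inr]
  rw [← pa_apply (diff_u hu hx)]
  rfl

lemma SyP (r : ℝ) (k : Fin 2) (B : Fin 2 ⊕ Fin m) : Sy r 0 0 (fun u x => pd (gr u) k x B) := by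
  rcases B with i | a
  · exact (Sy.const (if i = k then 1 else 0)).congr fun u hu x hx => pd_gr_inl hu hx k i
  · exact (Sy.d1 (fun _ => k) a).congr fun u hu x hx => pd_gr_inr hu hx k a

lemma SyG (r : ℝ) (i j : Fin 2) : Sy r 0 0 (fun (u : (Fin 2 → ℝ) → (Fin m → ℝ)) x => gmet (gr u) x i j) := by
  simp only [gmet, Matrix.of_apply, dotA]
  exact Sy.sum _ fun B _ => (SyP r i B).mul' (SyP r j B) (by simp) (by simp)

lemma SyDet (r : ℝ) : Sy r 0 0 (fun (u : (Fin 2 → ℝ) → (Fin m → ℝ)) x => (gmet (gr u) x).det) := by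
  simp only [Matrix.det_fin_two]
  exact Sy.sub ((SyG r _ _).mul' (SyG r _ _) (by simp) (by simp)) ((SyG r _ _).mul' (SyG r _ _) (by simp) (by simp))

lemma gmet_eq {r : ℝ} {u : (Fin 2 → ℝ) → (Fin m → ℝ)} (hu : Smo r u) {x} (hx : x ∈ Dr r) (i j : Fin 2) :
    gmet (gr u) x i j = (if i = j then 1 else 0) + ∑ a, pdIter u 1 x (fun _ => i) a * pdIter u 1 x (fun _ => j) a := by
  simp only [gmet, Matrix.of_apply, dotA, Fintype.sum_sum_type, pd_gr_inl hu hx, pd_gr_inr hu hx]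
  congr 1
  simp
  fin_cases i <;> fin_cases j <;> simp

lemma one_le_det {r : ℝ} {u : (Fin 2 → ℝ) → (Fin m → ℝ)} (hu : Smo r u) {x} (hx : x ∈ Dr r) :
    1 ≤ (gmet (gr u) x).det := by
  rw [Matrix.det_fin_two]
  simp only [gmet_eq hu hx]
  have cs := Finset.sum_mul_sq_le_sq_mul_sq Finset.univ (fun a => pdIter u 1 x (fun _ => 0) a) (fun a => pdIter u 1 x (fun _ => 1) a)
  have h0 : 0 ≤ ∑ a, pdIter u 1 x (fun _ => 0) a ^ 2 := Finset.sum_nonneg fun _ _ => sq_nonneg _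
  have h1 : 0 ≤ ∑ a, pdIter u 1 x (fun _ => 1) a ^ 2 := Finset.sum_nonneg fun _ _ => sq_nonneg _
  simp only [← sq, if_true, zero_ne_one, one_ne_zero, if_false, zero_add]
  rw [show ∑ a, pdIter u 1 x (fun _ => 1) a * pdIter u 1 x (fun _ => 0) a = ∑ a, pdIter u 1 x (fun _ => 0) a * pdIter u 1 x (fun _ => 1) a from
    Finset.sum_congr rfl fun _ _ => mul_comm _ _]
  nlinarith

lemma ginv_eq (M : Matrix (Fin 2) (Fin 2) ℝ) (i j : Fin 2) : M⁻¹ i j = M.det⁻¹ * M.adjugate i j := by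
  rw [Matrix.inv_def, Ring.inverse_eq_inv']; rfl

lemma SyGinv (r : ℝ) (i j : Fin 2) : Sy r 0 0 (fun (u : (Fin 2 → ℝ) → (Fin m → ℝ)) x => (gmet (gr u) x)⁻¹ i j) := by
  simp only [ginv_eq]
  refine ((SyDet r).inv fun u hu x hx => one_le_det hu hx).mul' (w2 := 0) (n2 := 0) ?_ (by simp) (by simp)
  simp only [Matrix.adjugate_fin_two]
  fin_cases i <;> fin_cases j <;> simp
  · exact SyG r _ _
  · exact (SyG r _ _).neg
  · exact (SyG r _ _).neg
  · exact SyG r _ _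

lemma diff_pdgr {r : ℝ} {u : (Fin 2 → ℝ) → (Fin m → ℝ)} (hu : Smo r u) {x} (hx : x ∈ Dr r) (i : Fin 2) :
    DifferentiableAt ℝ (pd (gr u) i) x :=
  differentiableAt_pi.mpr fun B => (SyP r i B).diffAt hu hx

lemma SyPP (r : ℝ) (i j : Fin 2) (B : Fin 2 ⊕ Fin m) : Sy r 1 1 (fun u x => pd (pd (gr u) i) j x B) :=
  ((SyP r i B).deriv j).congr fun u hu x hx => pd_apply (diff_pdgr hu hx i) j B

lemma SyChr (r : ℝ) (i j k : Fin 2) : Sy r 1 1 (fun (u : (Fin 2 → ℝ) → (Fin m → ℝ)) x => chr (gr u) i j k x) := by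
  simp only [chr, dotA]
  exact Sy.sum _ fun l _ => (SyGinv r k l).mul' (Sy.sum _ fun B _ => (SyPP r i j B).mul' (SyP r l B) (w := 1) (n := 1) (by simp) (by simp)) (by simp) (by simp)

/-- matrix of the normal projection -/
noncomputable def NN (F : (Fin 2 → ℝ) → (Fin 2 ⊕ Fin m → ℝ)) (x : Fin 2 → ℝ) (B C : Fin 2 ⊕ Fin m) : ℝ :=
  (if B = C then 1 else 0) - ∑ k, ∑ l, ((gmet F x)⁻¹ k l * pd F l x C) * pd F k x B

lemma nproj_apply (F : (Fin 2 → ℝ) → (Fin 2 ⊕ Fin m → ℝ)) (x v B) : nproj F x v B = ∑ C, NN F x B C * v C := by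
  simp only [nproj, NN, Pi.sub_apply, Finset.sum_apply, Pi.smul_apply, smul_eq_mul, sub_mul, Finset.sum_sub_distrib, ite_mul, one_mul, zero_mul,
    Finset.sum_ite_eq, Finset.mem_univ, if_true, dotA]
  congr 1
  simp only [Finset.sum_mul, Finset.mul_sum]
  conv_rhs => rw [Finset.sum_comm]
  refine Finset.sum_congr rfl fun k _ => ?_
  conv_rhs => rw [Finset.sum_comm]
  refine Finset.sum_congr rfl fun l _ => Finset.sum_congr rfl fun C _ => by ring

lemma nproj_tan (F : (Fin 2 → ℝ) → (Fin 2 ⊕ Fin m → ℝ)) (x) (h : 1 ≤ (gmet F x).det) (i : Fin 2) :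
    nproj F x (pd F i x) = 0 := by
  have hu : IsUnit (gmet F x).det := isUnit_iff_ne_zero.mpr (by positivity)
  have e := Matrix.nonsing_inv_mul (gmet F x) hu
  have e1 : ∀ k, ∑ l, (gmet F x)⁻¹ k l * dotA (pd F i x) (pd F l x) = if k = i then 1 else 0 := by
    intro k
    have := congrFun (congrFun e k) i
    rw [Matrix.mul_apply, Matrix.one_apply] at this
    rw [← this]
    refine Finset.sum_congr rfl fun l _ => ?_
    simp only [gmet, Matrix.of_apply, dotA]
    congr 1
    exact Finset.sum_congr rfl fun _ _ => mul_comm _ _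
  unfold nproj
  simp only [← Finset.sum_smul, e1]
  simp

lemma nproj_add (F : (Fin 2 → ℝ) → (Fin 2 ⊕ Fin m → ℝ)) (x v w) : nproj F x (v + w) = nproj F x v + nproj F x w := by
  ext B; simp [nproj_apply, mul_add, Finset.sum_add_distrib]

lemma nproj_smul (F : (Fin 2 → ℝ) → (Fin 2 ⊕ Fin m → ℝ)) (x v) (c : ℝ) : nproj F x (c • v) = c • nproj F x v := by
  ext B; simp only [nproj_apply, Pi.smul_apply, smul_eq_mul, Finset.mul_sum]
  exact Finset.sum_congr rfl fun _ _ => by ring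

lemma nproj_idem (F : (Fin 2 → ℝ) → (Fin 2 ⊕ Fin m → ℝ)) (x) (h : 1 ≤ (gmet F x).det) (v) :
    nproj F x (nproj F x v) = nproj F x v := by
  let L : (Fin 2 ⊕ Fin m → ℝ) →ₗ[ℝ] (Fin 2 ⊕ Fin m → ℝ) :=
    { toFun := nproj F x, map_add' := nproj_add F x, map_smul' := fun c v => nproj_smul F x v c }
  change L (L v) = L v
  have : L v = v - ∑ k, ∑ l, ((gmet F x)⁻¹ k l * dotA v (pd F l x)) • pd F k x := rfl
  conv_lhs => rw [this]
  rw [map_sub, map_sum]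
  simp only [map_sum, map_smul]
  have h0 : ∀ k, L (pd F k x) = 0 := nproj_tan F x h
  simp [h0]

lemma NN_idem (F : (Fin 2 → ℝ) → (Fin 2 ⊕ Fin m → ℝ)) (x) (h : 1 ≤ (gmet F x).det) (B D) :
    ∑ C, NN F x B C * NN F x C D = NN F x B D := by
  have := congrFun (nproj_idem F x h (Pi.single D 1)) B
  simpa [nproj_apply, Pi.single_apply] using this

lemma SyNN (r : ℝ) (B C : Fin 2 ⊕ Fin m) : Sy r 0 0 (fun u x => NN (gr u) x B C) := by
  unfold NN
  exact (Sy.const _).sub (Sy.sum _ fun k _ => Sy.sum _ fun l _ =>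
    ((SyGinv r k l).mul' (SyP r l C) (w := 0) (n := 0) (by simp) (by simp)).mul' (SyP r k B) (by simp) (by simp))

lemma pdpd_eq {r : ℝ} {u : (Fin 2 → ℝ) → (Fin m → ℝ)} (hu : Smo r u) {x} (hx : x ∈ Dr r) (I : Fin 2 → Fin 2) (a : Fin m) :
    pd (pd (gr u) (I 0)) (I 1) x (Sum.inr a) = pdIter u 2 x I a := by
  rw [pd_apply (diff_pdgr hu hx _)]
  rw [pa_congr (isOpen_Dr r) (fun y hy => pd_gr_inr hu hy (I 0) a) (I 1) x hx]
  rw [pa_pdIter hu hx]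
  exact congrFun (pa_comm (isOpen_Dr r) hu (I 1) (I 0) x hx) a

lemma pdpd_eq0 {r : ℝ} {u : (Fin 2 → ℝ) → (Fin m → ℝ)} (hu : Smo r u) {x} (hx : x ∈ Dr r) (i j k : Fin 2) :
    pd (pd (gr u) i) j x (Sum.inl k) = 0 := by
  rw [pd_apply (diff_pdgr hu hx _)]
  rw [pa_congr (isOpen_Dr r) (fun y hy => pd_gr_inl hu hy i k) j x hx]
  simp [pa]

lemma Sy_main {r : ℝ} {l : ℕ} {I : Fin (l+2) → Fin 2} {B : Fin 2 ⊕ Fin m} {R : Op m} (hR : Sy r (l+1) 2 R) :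
    Sy r (l+1) 1 (fun u x => ∑ a, NN (gr u) x B (Sum.inr a) * pdIter u (l+2) x I a + R u x) :=
  (Sy.sum _ fun a _ => (SyNN r B (Sum.inr a)).mul' (Sy.dd l I a) (by simp) (by simp)).add hR.weak

lemma cov_str (r : ℝ) (l : ℕ) : ∀ (I : Fin (l+2) → Fin 2) (B : Fin 2 ⊕ Fin m), ∃ R : Op m, Sy r (l+1) 2 R ∧
    (l = 0 → ∀ u x, R u x = 0) ∧
    ∀ u, Smo r u → ∀ x ∈ Dr r, covIter (gr u) l x I B = ∑ a, NN (gr u) x B (Sum.inr a) * pdIter u (l+2) x I a + R u x := by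
  induction l with
  | zero =>
    intro I B
    refine ⟨_, Sy.zero _ _, fun _ _ _ => rfl, fun u hu x hx => ?_⟩
    simp only [covIter, sffT, nproj_apply, Fintype.sum_sum_type, pdpd_eq hu hx, pdpd_eq0 hu hx]
    simp
  | succ l ih =>
    intro I B
    choose R hR _ hcov using ih
    have hSy : ∀ I' B', Sy r (l+1) 1 (fun u x => covIter (gr u) l x I' B') := fun I' B' =>
      (Sy_main (hR I' B')).congr (hcov I' B')
    refine ⟨fun u x => ∑ C, NN (gr u) x B C * (∑ a, pa (I 0) (fun y => NN (gr u) y C (Sum.inr a)) x * pdIter u (l+2) x (Fin.tail I) a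
        + pa (I 0) (R (Fin.tail I) C u) x) - ∑ a : Fin (l+2), ∑ mm : Fin 2,
          chr (gr u) (I 0) (Fin.tail I a) mm x * covIter (gr u) l x (Function.update (Fin.tail I) a mm) B, ?_, by simp, ?_⟩
    · refine Sy.sub (Sy.sum _ fun C _ => (SyNN r B C).mul' (w2 := l+2) (n2 := 2) ?_ (by omega) (by omega))
        (Sy.sum _ fun a _ => Sy.sum _ fun mm _ => (SyChr r _ _ _).mul' (hSy _ _) (by omega) (by omega))
      refine (Sy.sum _ fun a _ => ?_).add ((hR _ _).deriv (I 0))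
      exact ((SyNN r C (Sum.inr a)).deriv (I 0)).mul' (Sy.dd l (Fin.tail I) a) (by omega) (by omega)
    · intro u hu x hx
      have hd : DifferentiableAt ℝ (fun y => covIter (gr u) l y (Fin.tail I)) x :=
        differentiableAt_pi.mpr fun C => (hSy (Fin.tail I) C).diffAt hu hx
      have e1 : ∀ C, pd (fun y => covIter (gr u) l y (Fin.tail I)) (I 0) x C =
          ∑ a, NN (gr u) x C (Sum.inr a) * pdIter u (l+3) x I a
          + (∑ a, pa (I 0) (fun y => NN (gr u) y C (Sum.inr a)) x * pdIter u (l+2) x (Fin.tail I) a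
            + pa (I 0) (R (Fin.tail I) C u) x) := by
        intro C
        rw [pd_apply hd, pa_congr (isOpen_Dr r) (fun y hy => hcov (Fin.tail I) C u hu y hy) (I 0) x hx]
        have d1 : ∀ a, DifferentiableAt ℝ (fun y => NN (gr u) y C (Sum.inr a)) x := fun a => (SyNN r C (Sum.inr a)).diffAt hu hx
        have d2 : ∀ a, DifferentiableAt ℝ (fun y => pdIter u (l+2) y (Fin.tail I) a) x := fun a => (Sy.dd l (Fin.tail I) a).diffAt hu hx
        rw [pa_add (DifferentiableAt.fun_sum fun a _ => (d1 a).fun_mul (d2 a)) ((hR _ _).diffAt hu hx),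
          pa_sum _ (fun a _ => (d1 a).fun_mul (d2 a)), ← add_assoc, ← Finset.sum_add_distrib]
        congr 1
        refine Finset.sum_congr rfl fun a _ => ?_
        rw [pa_mul (d1 a) (d2 a), pa_pdIter hu hx, Fin.cons_self_tail, add_comm]
      simp only [covIter, covDer, Pi.sub_apply, Finset.sum_apply, Pi.smul_apply, smul_eq_mul, nproj_apply, e1]
      rw [← add_sub_assoc]
      congr 1
      simp only [mul_add, Finset.sum_add_distrib]
      congr 1
      simp only [Finset.mul_sum]
      rw [Finset.sum_comm]
      refine Finset.sum_congr rfl fun a _ => ?_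
      rw [← NN_idem (gr u) x (one_le_det hu hx) B (Sum.inr a), Finset.sum_mul]
      exact Finset.sum_congr rfl fun _ _ => by ring

end Stmt18

end

section

namespace Stmt18
open MeasureTheory Set

variable {m : ℕ}

lemma prod_sum_fn {N : Type*} [Fintype N] {p : ℕ} (f : Fin p → N → ℝ) :
    ∏ s, ∑ B, f s B = ∑ Bs : Fin p → N, ∏ s, f s (Bs s) := by
  classical
  exact Fintype.prod_sum f

lemma ten {N M : Type*} [Fintype N] [Fintype M] {p : ℕ} (E P : Fin 2 → N → ℝ) (H : Fin 2 → Fin 2 → ℝ)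
    (hH : ∀ i j, H i j = ∑ B, E i B * E j B) (hP : ∀ i j, ∑ B, P j B * E i B = if i = j then 1 else 0)
    (T : (Fin p → Fin 2) → M → ℝ) :
    0 ≤ ∑ I, ∑ J, (∏ s, H (I s) (J s)) * ∑ C, T I C * T J C ∧ ∀ K,
    ∑ C, (T K C)^2 ≤ (∏ s, ∑ B, P (K s) B ^ 2) * ∑ I, ∑ J, (∏ s, H (I s) (J s)) * ∑ C, T I C * T J C := by
  set S : (Fin p → N) → M → ℝ := fun Bs C => ∑ I, (∏ s, E (I s) (Bs s)) * T I C with hS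
  have e : ∑ I, ∑ J, (∏ s, H (I s) (J s)) * ∑ C, T I C * T J C = ∑ C, ∑ Bs, S Bs C ^ 2 := by
    simp only [hH, prod_sum_fn, hS, sq, Finset.sum_mul_sum, Finset.mul_sum, Finset.sum_mul, Finset.prod_mul_distrib]
    -- left: I J C B ; right: C B I J
    calc _ = ∑ I, ∑ C, ∑ J, ∑ Bs : Fin p → N, ((∏ s, E (I s) (Bs s)) * ∏ s, E (J s) (Bs s)) * (T I C * T J C) :=
          Finset.sum_congr rfl fun I _ => Finset.sum_comm
      _ = ∑ C, ∑ I, ∑ J, ∑ Bs : Fin p → N, ((∏ s, E (I s) (Bs s)) * ∏ s, E (J s) (Bs s)) * (T I C * T J C) := Finset.sum_comm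
      _ = ∑ C, ∑ I, ∑ Bs : Fin p → N, ∑ J, ((∏ s, E (I s) (Bs s)) * ∏ s, E (J s) (Bs s)) * (T I C * T J C) :=
          Finset.sum_congr rfl fun C _ => Finset.sum_congr rfl fun I _ => Finset.sum_comm
      _ = ∑ C, ∑ Bs : Fin p → N, ∑ I, ∑ J, ((∏ s, E (I s) (Bs s)) * ∏ s, E (J s) (Bs s)) * (T I C * T J C) :=
          Finset.sum_congr rfl fun C _ => Finset.sum_comm
      _ = _ := by
          refine Finset.sum_congr rfl fun C _ => Finset.sum_congr rfl fun B _ => Finset.sum_congr rfl fun I _ => Finset.sum_congr rfl fun J _ => ?_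
          ring
  rw [e]
  refine ⟨Finset.sum_nonneg fun _ _ => Finset.sum_nonneg fun _ _ => sq_nonneg _, fun K => ?_⟩
  rw [Finset.mul_sum]
  refine Finset.sum_le_sum fun C _ => ?_
  have hT : T K C = ∑ Bs : Fin p → N, (∏ s, P (K s) (Bs s)) * S Bs C := by
    simp only [hS, Finset.mul_sum]
    rw [Finset.sum_comm]
    have : ∀ I, ∑ Bs : Fin p → N, (∏ s, P (K s) (Bs s)) * ((∏ s, E (I s) (Bs s)) * T I C) = (if I = K then 1 else 0) * T I C := by
      intro I
      simp only [← mul_assoc, ← Finset.sum_mul, ← Finset.prod_mul_distrib]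
      rw [← prod_sum_fn (fun s B => P (K s) B * E (I s) B)]
      simp only [hP]
      congr 1
      by_cases h : I = K
      · simp [h]
      · rw [if_neg h]
        obtain ⟨s, hs⟩ := Function.ne_iff.mp h
        exact Finset.prod_eq_zero (Finset.mem_univ s) (if_neg hs)
    simp only [this]
    simp
  rw [hT, prod_sum_fn]
  simp only [Finset.prod_pow]
  exact Finset.sum_mul_sq_le_sq_mul_sq _ _ _

lemma nCov2_ten (F : (Fin 2 → ℝ) → (Fin 2 ⊕ Fin m → ℝ)) (x) (h : 1 ≤ (gmet F x).det) (l : ℕ) :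
    0 ≤ nCov2 F l x ∧ ∀ K, ∑ C, (covIter F l x K C)^2 ≤ (∏ s, gmet F x (K s) (K s)) * nCov2 F l x := by
  have hu : IsUnit (gmet F x).det := isUnit_iff_ne_zero.mpr (by positivity)
  have e := Matrix.nonsing_inv_mul (gmet F x) hu
  have gs : ∀ i j, gmet F x i j = gmet F x j i := by
    intro i j
    simp only [gmet, Matrix.of_apply, dotA]
    exact Finset.sum_congr rfl fun _ _ => mul_comm _ _
  have gt : (gmet F x).transpose = gmet F x := by ext i j; exact gs j i
  have is : ∀ i j, (gmet F x)⁻¹ i j = (gmet F x)⁻¹ j i := by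
    intro i j
    have : ((gmet F x)⁻¹).transpose = (gmet F x)⁻¹ := by rw [Matrix.transpose_nonsing_inv, gt]
    exact (congrFun (congrFun this i) j).symm
  have e1 : ∀ i j, ∑ k, (gmet F x)⁻¹ i k * gmet F x k j = if i = j then 1 else 0 := by
    intro i j
    have := congrFun (congrFun e i) j
    rwa [Matrix.mul_apply, Matrix.one_apply] at this
  have hP : ∀ i j, ∑ B, pd F j x B * (∑ k, (gmet F x)⁻¹ i k * pd F k x B) = if i = j then 1 else 0 := by
    intro i j
    rw [← e1]
    simp only [Finset.mul_sum]
    rw [Finset.sum_comm]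
    refine Finset.sum_congr rfl fun k _ => ?_
    simp only [gmet, Matrix.of_apply, dotA, Finset.mul_sum]
    exact Finset.sum_congr rfl fun _ _ => by ring
  have := ten (fun i B => ∑ k, (gmet F x)⁻¹ i k * pd F k x B) (fun i B => pd F i x B) (fun i j => (gmet F x)⁻¹ i j) (by
    intro i j
    beta_reduce
    have : ∀ B, (∑ k, (gmet F x)⁻¹ i k * pd F k x B) * (∑ k, (gmet F x)⁻¹ j k * pd F k x B)
      = ∑ k, (gmet F x)⁻¹ i k * (pd F k x B * ∑ k, (gmet F x)⁻¹ j k * pd F k x B) := by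
      intro B; rw [Finset.sum_mul]; exact Finset.sum_congr rfl fun _ _ => by ring
    simp only [this]
    rw [Finset.sum_comm]
    simp only [← Finset.mul_sum, hP]
    simp) hP (covIter F l x)
  refine ⟨this.1, fun K => (this.2 K).trans (le_of_eq ?_)⟩
  congr 1
  refine Finset.prod_congr rfl fun s _ => ?_
  simp [gmet, dotA, sq]

lemma Sy.bound0 {r : ℝ} {E : Op m} (h : Sy r 0 0 E) (α : ℝ) (hα : 0 < α) : ∃ C ≥ (0:ℝ), ∀ u, Smo r u → ∀ x ∈ Dr r,
    (∀ I a, |pdIter u 1 x I a| ≤ α) → |E u x| ≤ C := by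
  obtain ⟨C, hC, H⟩ := h.bound α 1 1 hα one_pos one_pos
  refine ⟨C, hC, fun u hu x hx h1 => ?_⟩
  have := H u hu x hx h1 0 1 le_rfl zero_le_one one_pos le_rfl (fun j hj => by omega)
  simpa using this

lemma bound0_fam {ι : Type*} [Fintype ι] {r : ℝ} {E : ι → Op m} (h : ∀ k, Sy r 0 0 (E k)) (α : ℝ) (hα : 0 < α) :
    ∃ C ≥ (1:ℝ), ∀ u, Smo r u → ∀ x ∈ Dr r, (∀ I a, |pdIter u 1 x I a| ≤ α) → ∀ k, |E k u x| ≤ C := by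
  choose C hC H using fun k => (h k).bound0 α hα
  refine ⟨1 + ∑ k, C k, by linarith [Finset.sum_nonneg fun k (_ : k ∈ Finset.univ) => hC k], fun u hu x hx h1 k => ?_⟩
  have := Finset.single_le_sum (f := C) (fun k _ => hC k) (Finset.mem_univ k)
  linarith [H k u hu x hx h1]

/-- integrand of the H norm -/
noncomputable def nC (u : (Fin 2 → ℝ) → (Fin m → ℝ)) (l : ℕ) (x : Fin 2 → ℝ) : ℝ :=
  nCov2 (gr u) l x * Real.sqrt (gmet (gr u) x).det

lemma SyCov (r : ℝ) (l : ℕ) (I : Fin (l+2) → Fin 2) (B : Fin 2 ⊕ Fin m) : Sy r (l+1) 1 (fun u x => covIter (gr u) l x I B) := by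
  obtain ⟨R, hR, _, h⟩ := cov_str r l I B
  exact (Sy_main hR).congr h

lemma cont_nC {r : ℝ} {u : (Fin 2 → ℝ) → (Fin m → ℝ)} (hu : Smo r u) (l : ℕ) : ContinuousOn (nC u l) (Dr r) := by
  unfold nC nCov2 dotA
  refine ContinuousOn.mul ?_ (Real.continuous_sqrt.comp_continuousOn ((SyDet r).smooth hu).continuousOn)
  refine continuousOn_finsetSum _ fun I _ => continuousOn_finsetSum _ fun J _ => ContinuousOn.mul ?_ ?_
  · exact continuousOn_finsetProd _ fun s _ => ((SyGinv r _ _).smooth hu).continuousOn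
  · exact continuousOn_finsetSum _ fun B _ => ((SyCov r l I B).smooth hu).continuousOn.mul ((SyCov r l J B).smooth hu).continuousOn

/-- lower bound of the normal projection -/
lemma nproj_lower {r α : ℝ} {u : (Fin 2 → ℝ) → (Fin m → ℝ)} (hu : Smo r u) {x} (hx : x ∈ Dr r)
    (h1 : ∀ I a, |pdIter u 1 x I a| ≤ α) (D : Fin m → ℝ) :
    ∑ a, D a ^ 2 ≤ (3 + 6 * m * α^2) * ∑ B, (∑ a, NN (gr u) x B (Sum.inr a) * D a) ^ 2 := by
  set v : Fin 2 ⊕ Fin m → ℝ := Sum.elim 0 D with hv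
  have e : ∀ B, ∑ a, NN (gr u) x B (Sum.inr a) * D a = nproj (gr u) x v B := by
    intro B; simp [nproj_apply, Fintype.sum_sum_type, hv]
  simp only [e]
  set w := nproj (gr u) x v with hw
  obtain ⟨c, hc⟩ : ∃ c : Fin 2 → ℝ, ∀ B, w B = v B - ∑ k, c k * pd (gr u) k x B := by
    refine ⟨fun k => ∑ l, (gmet (gr u) x)⁻¹ k l * dotA v (pd (gr u) l x), fun B => ?_⟩
    rw [hw]
    simp [nproj]; ring
  have hci : ∀ i, c i = - w (Sum.inl i) := by
    intro i
    rw [hc]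
    simp [pd_gr_inl hu hx, hv]
  have hD : ∀ a, D a = w (Sum.inr a) - w (Sum.inl 0) * pdIter u 1 x (fun _ => 0) a - w (Sum.inl 1) * pdIter u 1 x (fun _ => 1) a := by
    intro a
    rw [hc (Sum.inr a), Fin.sum_univ_two, hci, hci, pd_gr_inr hu hx, pd_gr_inr hu hx]
    simp [hv]; ring
  set W := ∑ B, w B ^ 2 with hW
  have hWe : W = (w (Sum.inl 0))^2 + (w (Sum.inl 1))^2 + ∑ a, w (Sum.inr a)^2 := by
    rw [hW, Fintype.sum_sum_type, Fin.sum_univ_two]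
  have hs : 0 ≤ ∑ a, w (Sum.inr a)^2 := Finset.sum_nonneg fun _ _ => sq_nonneg _
  have hDa : ∀ a, D a ^ 2 ≤ 3 * w (Sum.inr a)^2 + 3 * α^2 * W := by
    intro a
    have p0 : (pdIter u 1 x (fun _ => 0) a)^2 ≤ α^2 := sq_le_sq' (by linarith [abs_le.mp (h1 (fun _ => 0) a)]) (abs_le.mp (h1 (fun _ => 0) a)).2
    have p1 : (pdIter u 1 x (fun _ => 1) a)^2 ≤ α^2 := sq_le_sq' (by linarith [abs_le.mp (h1 (fun _ => 1) a)]) (abs_le.mp (h1 (fun _ => 1) a)).2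
    rw [hD a]
    set q0 := pdIter u 1 x (fun _ => 0) a
    set q1 := pdIter u 1 x (fun _ => 1) a
    set z := w (Sum.inr a)
    set w0 := w (Sum.inl 0)
    set w1 := w (Sum.inl 1)
    have a1 : (z - w0 * q0 - w1 * q1)^2 ≤ 3 * (z^2 + w0^2 * q0^2 + w1^2*q1^2) := by
      nlinarith [sq_nonneg (z + w0*q0), sq_nonneg (z + w1*q1), sq_nonneg (w0*q0 - w1*q1)]
    have a2 : w0^2*q0^2 ≤ w0^2*α^2 := by gcongr
    have a3 : w1^2*q1^2 ≤ w1^2*α^2 := by gcongr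
    have a4 : (w0^2+w1^2) * α^2 ≤ W * α^2 := by gcongr; linarith
    nlinarith
  calc _ ≤ ∑ a, (3 * w (Sum.inr a)^2 + 3 * α^2 * W) := Finset.sum_le_sum fun a _ => hDa a
    _ = 3 * ∑ a, w (Sum.inr a)^2 + m * (3 * α^2 * W) := by
      rw [Finset.sum_add_distrib, ← Finset.mul_sum]; simp
    _ ≤ _ := by
      have hW0 : 0 ≤ W := Finset.sum_nonneg fun _ _ => sq_nonneg _
      have : 0 ≤ m * (3 * α^2 * W) := by positivity
      nlinarith [sq_nonneg (w (Sum.inl 0)), sq_nonneg (w (Sum.inl 1))]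

lemma add_sq_le' (a b : ℝ) : (a + b)^2 ≤ 2 * a^2 + 2 * b^2 := by nlinarith [sq_nonneg (a-b)]

set_option maxHeartbeats 1600000 in
lemma pt (r α : ℝ) (hα : 0 < α) (l : ℕ) : ∃ R : (Fin (l+2) → Fin 2) → (Fin 2 ⊕ Fin m) → Op m,
    (∀ I B, Sy r (l+1) 2 (R I B)) ∧ (l = 0 → ∀ I B u x, R I B u x = 0) ∧
    ∃ C > (0:ℝ), ∀ u, Smo r u → ∀ x ∈ Dr r, (∀ I a, |pdIter u 1 x I a| ≤ α) →
      VV u l x ≤ C * (nC u l x + ∑ I, ∑ B, (R I B u x)^2) ∧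
      nC u l x ≤ C * (VV u l x + ∑ I, ∑ B, (R I B u x)^2) ∧ 0 ≤ nC u l x := by
  choose R hR hR0 hcov using cov_str (m := m) r l
  obtain ⟨Cg, hCg, Hg⟩ := bound0_fam (m := m) (fun p : Fin 2 × Fin 2 => SyG (m := m) r p.1 p.2) α hα
  obtain ⟨Ci, hCi, Hi⟩ := bound0_fam (m := m) (fun p : Fin 2 × Fin 2 => SyGinv (m := m) r p.1 p.2) α hα
  obtain ⟨Cd, hCd, Hd⟩ := bound0_fam (m := m) (fun p : Unit => SyDet (m := m) r) α hα
  obtain ⟨Cn, hCn, Hn⟩ := bound0_fam (m := m) (fun p : (Fin 2 ⊕ Fin m) × (Fin 2 ⊕ Fin m) => SyNN (m := m) r p.1 p.2) α hα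
  set p2 : ℝ := (Fintype.card (Fin (l+2) → Fin 2) : ℝ) with hp2
  set c1 := 3 + 6 * m * α^2 with hc1
  have hc1' : 1 ≤ c1 := by have : 0 ≤ 6 * m * α^2 := by positivity
                           linarith
  set G := Cg ^ (l+2) with hG
  have hG1 : 1 ≤ G := one_le_pow₀ hCg
  have hp20 : 0 ≤ p2 := by positivity
  set CN : ℝ := 2 * ((2 + m) * (m * Cn ^ 2)) + 2 with hCN
  have hCN0 : 0 < CN := by positivity
  refine ⟨R, hR, fun h I B => hR0 I B h, c1 * (2 * (p2 * G) + 2) + Cd * (Ci^(l+2) * p2 * CN) , by positivity, ?_⟩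
  intro u hu x hx h1
  set T := fun I B => covIter (gr u) l x I B with hT
  set Rs := ∑ I, ∑ B, (R I B u x)^2 with hRs
  set Ts := ∑ I, ∑ B, (T I B)^2 with hTs
  have hRs0 : 0 ≤ Rs := Finset.sum_nonneg fun _ _ => Finset.sum_nonneg fun _ _ => sq_nonneg _
  have hTs0 : 0 ≤ Ts := Finset.sum_nonneg fun _ _ => Finset.sum_nonneg fun _ _ => sq_nonneg _
  obtain ⟨hn0, hn⟩ := nCov2_ten (gr u) x (one_le_det hu hx) l
  have hdet := one_le_det hu hx
  have hsq1 : 1 ≤ Real.sqrt (gmet (gr u) x).det := by rw [Real.one_le_sqrt]; exact hdet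
  have hsq2 : Real.sqrt (gmet (gr u) x).det ≤ Cd := by
    have := Hd u hu x hx h1 ()
    rw [abs_of_nonneg (by linarith)] at this
    refine (Real.sqrt_le_sqrt this).trans ?_
    rw [Real.sqrt_le_left (by linarith)]
    nlinarith
  have hle : nCov2 (gr u) l x ≤ nC u l x := by unfold nC; nlinarith
  have hle2 : nC u l x ≤ nCov2 (gr u) l x * Cd := by unfold nC; gcongr
  have hV := VV_nonneg u l x
  have hnC0 : 0 ≤ nC u l x := hn0.trans hle
  -- lower bound
  have hTn : Ts ≤ p2 * G * nCov2 (gr u) l x := by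
    calc Ts ≤ ∑ _I : Fin (l+2) → Fin 2, G * nCov2 (gr u) l x := by
          refine Finset.sum_le_sum fun I _ => (hn I).trans ?_
          gcongr
          rw [hG]
          calc _ ≤ ∏ _s : Fin (l+2), Cg := by
                refine Finset.prod_le_prod (fun s _ => ?_) fun s _ => (le_abs_self _).trans (Hg u hu x hx h1 (I s, I s))
                simp only [gmet, Matrix.of_apply, dotA]
                exact Finset.sum_nonneg fun _ _ => mul_self_nonneg _
            _ = _ := by simp
      _ = _ := by simp [hp2]; ring
  have hVT : VV u l x ≤ c1 * (2 * Ts + 2 * Rs) := by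
    unfold VV
    calc _ ≤ ∑ I : Fin (l+2) → Fin 2, c1 * (∑ B, (2 * (T I B)^2 + 2 * (R I B u x)^2)) := by
          refine Finset.sum_le_sum fun I _ => (nproj_lower hu hx h1 (fun a => pdIter u (l+2) x I a)).trans ?_
          gcongr with B
          have : ∑ a, NN (gr u) x B (Sum.inr a) * pdIter u (l+2) x I a = T I B + - R I B u x := by
            rw [hT]; beta_reduce; rw [hcov I B u hu x hx]; ring
          rw [this]
          simpa using add_sq_le' (T I B) (- R I B u x)
      _ = _ := by
          rw [← Finset.mul_sum, hTs, hRs]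
          simp only [Finset.sum_add_distrib, Finset.mul_sum]
  -- upper bound
  have hnT : nCov2 (gr u) l x ≤ Ci^(l+2) * p2 * Ts := by
    set N2 := fun I => ∑ B, (T I B)^2 with hN2
    have hterm : ∀ I J, (∏ s, (gmet (gr u) x)⁻¹ (I s) (J s)) * dotA (covIter (gr u) l x I) (covIter (gr u) l x J)
        ≤ Ci^(l+2) * ((N2 I + N2 J)/2) := by
      intro I J
      have b1 : |∏ s, (gmet (gr u) x)⁻¹ (I s) (J s)| ≤ Ci^(l+2) := by
        rw [Finset.abs_prod]
        calc _ ≤ ∏ _s : Fin (l+2), Ci := Finset.prod_le_prod (fun _ _ => abs_nonneg _) fun s _ => Hi u hu x hx h1 (I s, J s)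
          _ = _ := by simp
      have b2 : |dotA (covIter (gr u) l x I) (covIter (gr u) l x J)| ≤ (N2 I + N2 J)/2 := by
        unfold dotA
        refine (Finset.abs_sum_le_sum_abs _ _).trans ?_
        rw [hN2]; beta_reduce
        rw [← Finset.sum_add_distrib, Finset.sum_div]
        refine Finset.sum_le_sum fun B _ => ?_
        change |T I B * T J B| ≤ _
        rw [abs_le]; constructor <;> nlinarith [sq_nonneg (T I B - T J B), sq_nonneg (T I B + T J B)]
      refine (le_abs_self _).trans ?_
      rw [abs_mul]
      gcongr
    unfold nCov2
    calc _ ≤ ∑ I, ∑ J, Ci^(l+2) * ((N2 I + N2 J)/2) := Finset.sum_le_sum fun I _ => Finset.sum_le_sum fun J _ => hterm I J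
      _ = _ := by
        simp only [← Finset.mul_sum, ← Finset.sum_div, Finset.sum_add_distrib]
        have : Ts = ∑ I, N2 I := rfl
        rw [← this]
        simp only [Finset.sum_const, Finset.card_univ, nsmul_eq_mul, ← Finset.mul_sum, ← this, ← hp2]
        ring
  have hTV : Ts ≤ CN * (VV u l x + Rs) := by
    have hTI : ∀ I B, (T I B)^2 ≤ 2 * ((m * Cn^2) * ∑ a, (pdIter u (l+2) x I a)^2) + 2 * (R I B u x)^2 := by
      intro I B
      rw [hT]; beta_reduce; rw [hcov I B u hu x hx]
      refine (add_sq_le' _ _).trans ?_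
      gcongr
      refine (Finset.sum_mul_sq_le_sq_mul_sq _ _ _).trans ?_
      gcongr
      calc _ ≤ ∑ _a : Fin m, Cn^2 := Finset.sum_le_sum fun a _ => by
            rw [← sq_abs]
            have := Hn u hu x hx h1 (B, Sum.inr a)
            gcongr
        _ = _ := by simp
    calc Ts ≤ ∑ I, ∑ B : Fin 2 ⊕ Fin m, (2 * ((m * Cn^2) * ∑ a, (pdIter u (l+2) x I a)^2) + 2 * (R I B u x)^2) :=
          Finset.sum_le_sum fun I _ => Finset.sum_le_sum fun B _ => hTI I B
      _ = 2 * ((2 + m) * (m * Cn ^ 2)) * VV u l x + 2 * Rs := by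
          simp only [Finset.sum_add_distrib, ← Finset.mul_sum, Finset.sum_const, Finset.card_univ, nsmul_eq_mul, Fintype.card_sum, Fintype.card_fin]
          push_cast
          have : VV u l x = ∑ I, ∑ a, (pdIter u (l+2) x I a)^2 := rfl
          rw [← this]; ring
      _ ≤ _ := by
          have : 0 ≤ 2 * ((2 + m) * (m * Cn ^ 2)) * Rs := by positivity
          rw [hCN]; nlinarith
  have hextra : 0 ≤ Cd * (Ci^(l+2) * p2 * CN) := by positivity
  have hextra2 : 0 ≤ c1 * (2 * (p2 * G) + 2) := by positivity
  refine ⟨?_, ?_, hnC0⟩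
  · have s1 : Ts ≤ (p2 * G) * nC u l x := hTn.trans (by gcongr)
    have s2 : 2 * Ts + 2 * Rs ≤ (2 * (p2 * G) + 2) * (nC u l x + Rs) := by
      have : 0 ≤ p2 * G * Rs := by positivity
      nlinarith
    calc VV u l x ≤ c1 * ((2 * (p2 * G) + 2) * (nC u l x + Rs)) := hVT.trans (by gcongr)
      _ = (c1 * (2 * (p2 * G) + 2)) * (nC u l x + Rs) := by ring
      _ ≤ _ := mul_le_mul_of_nonneg_right (by linarith) (by linarith)
  · calc nC u l x ≤ (Ci^(l+2) * p2 * (CN * (VV u l x + Rs))) * Cd := hle2.trans (by gcongr; exact hnT.trans (by gcongr))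
      _ = (Cd * (Ci^(l+2) * p2 * CN)) * (VV u l x + Rs) := by ring
      _ ≤ _ := mul_le_mul_of_nonneg_right (by linarith) (by linarith)

end Stmt18

end

section

namespace Stmt18
open MeasureTheory Set

variable {m : ℕ}

lemma cs_int {f : ℝ → ℝ} {S : ℝ} (hS : 0 < S) (hf : ContinuousOn f (Icc 0 S)) :
    (∫ τ in (0:ℝ)..S, f τ)^2 ≤ S * ∫ τ in (0:ℝ)..S, f τ ^ 2 := by
  set L := ∫ τ in (0:ℝ)..S, f τ with hL
  have hu : uIcc 0 S = Icc 0 S := uIcc_of_le hS.le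
  have i1 : IntervalIntegrable f volume 0 S := ContinuousOn.intervalIntegrable (by rwa [hu])
  have i2 : IntervalIntegrable (fun τ => f τ ^ 2) volume 0 S := ContinuousOn.intervalIntegrable (by rw [hu]; exact hf.pow 2)
  have h0 : 0 ≤ ∫ τ in (0:ℝ)..S, (f τ - L / S)^2 := intervalIntegral.integral_nonneg hS.le fun _ _ => sq_nonneg _
  have e : ∫ τ in (0:ℝ)..S, (f τ - L / S)^2 = (∫ τ in (0:ℝ)..S, f τ ^ 2) - L^2 / S := by
    have : ∀ τ, (f τ - L / S)^2 = (f τ ^ 2 - (2 * (L/S)) * f τ) + (L/S)^2 := fun τ => by ring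
    simp only [this]
    rw [intervalIntegral.integral_add (i2.sub (i1.const_mul _)) (by simp), intervalIntegral.integral_sub i2 (i1.const_mul _),
      intervalIntegral.integral_const_mul, intervalIntegral.integral_const, ← hL]
    simp
    field_simp
    ring
  rw [e, sub_nonneg, div_le_iff₀ hS] at h0
  linarith

/-- combined integrand -/
noncomputable def ZZ (u : (Fin 2 → ℝ) → (Fin m → ℝ)) (n : ℕ) (s : ℝ) (y : Fin 2 → ℝ) : ℝ :=
  VV u (n+1) y + VV u 0 y / (s^(n+1))^2

lemma ZZ_nonneg (u : (Fin 2 → ℝ) → (Fin m → ℝ)) (n s y) : 0 ≤ ZZ u n s y := by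
  have := VV_nonneg u (n+1) y
  have := VV_nonneg u 0 y
  unfold ZZ; positivity

lemma cont_ZZ {r : ℝ} {u : (Fin 2 → ℝ) → (Fin m → ℝ)} (hu : Smo r u) (n s) : ContinuousOn (ZZ u n s) (Dr r) :=
  (cont_VV hu (n+1)).add ((cont_VV hu 0).div_const _)

lemma Rbd {ι : Type*} [Fintype ι] (n : ℕ) (r α β : ℝ) (hα : 0 < α) (hβ : 0 < β) (R : ι → Op m) (hR : ∀ k, Sy r (n+2) 2 (R k)) :
    ∃ C ≥ (0:ℝ), ∀ (ρ s : ℝ) (u : (Fin 2 → ℝ) → (Fin m → ℝ)), Smo r u →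
    (∀ x ∈ Dr r, VV u 0 x ≤ β ^ 2) → (∀ x ∈ Dr r, ∀ I a, |pdIter u 1 x I a| ≤ α) → 0 < ρ → Dr ρ ⊆ Dr r → 0 < s → s ≤ 1 → 2 * s ≤ ρ / 4 →
    ∀ x ∈ Dr ρ, ∃ b σ, (∀ i : ℕ, ∀ τ ∈ Icc 0 (2*s), x + τ • dir b σ i ∈ Dr ρ) ∧
      ∑ k, (R k u x)^2 ≤ C * s * ∑ i ∈ Finset.range (n+1), ∫ τ in (0:ℝ)..(2*s), ZZ u n s (x + τ • dir b σ i) := by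
  obtain ⟨K, hK, H⟩ := main_scale (m := m) n
  choose C hC HC using fun k => (hR k).bound α β K hα hβ (by linarith)
  refine ⟨(∑ k, (C k * β * K)^2) * (n+1) * 4, by positivity, ?_⟩
  intro ρ s u hu hV h1 hρ hsub hs hs1 hsρ x hx
  obtain ⟨b, σ, hseg, A, h, hA, hAβ, h0, hhs, hAh, hj⟩ := H r ρ s β u hu hβ hV hρ hsub hs hsρ x hx
  refine ⟨b, σ, hseg, ?_⟩
  set Q := ∑ i ∈ Finset.range (n+1), (LI u (n+1) x (dir b σ i) s + LI u 0 x (dir b σ i) s / s ^ (n+1)) with hQ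
  have hQ0 : 0 ≤ Q := Finset.sum_nonneg fun i _ => by
    have := LI_nonneg u (n+1) x (dir b σ i) hs
    have := LI_nonneg u 0 x (dir b σ i) hs
    positivity
  have hRk : ∀ k, (R k u x)^2 ≤ (C k * β * K)^2 * Q^2 := by
    intro k
    have hb := HC k u hu x (hsub hx) (h1 x (hsub hx)) A h hA hAβ h0 (hhs.trans hs1) (by
      intro j hjn I a
      obtain ⟨a', b', hab, hq⟩ := pdIter_eq_qq (m := m) r (j+2) I
      rw [hq u hu x (hsub hx)]
      exact hj j (by simp at hjn; omega) a' b' hab a)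
    have e : (A * h)^2 / h^(n+2) = A * (A / h^n) := by
      rw [pow_add]; field_simp
    rw [e] at hb
    have hck := hC k
    have : |R k u x| ≤ C k * β * K * Q := by
      have hp : 0 ≤ A / h^n := by positivity
      calc _ ≤ C k * (A * (A / h^n)) := hb
        _ ≤ C k * (β * (K * Q)) := by gcongr
        _ = _ := by ring
    rw [← sq_abs, ← mul_pow]
    gcongr
  have hLI : ∀ l i, (LI u l x (dir b σ i) s)^2 ≤ 2 * s * ∫ τ in (0:ℝ)..(2*s), VV u l (x + τ • dir b σ i) := by
    intro l i
    have := cs_int (S := 2*s) (by positivity) (Real.continuous_sqrt.comp_continuousOn ((cont_VV hu l).comp (f := fun τ : ℝ => x + τ • dir b σ i) (by fun_prop) fun τ hτ => hsub (hseg i τ hτ)))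
    simpa only [LI, Function.comp, Real.sq_sqrt (VV_nonneg _ _ _)] using this
  have hZ : ∀ i, ∫ τ in (0:ℝ)..(2*s), ZZ u n s (x + τ • dir b σ i) = (∫ τ in (0:ℝ)..(2*s), VV u (n+1) (x + τ • dir b σ i)) +
      (∫ τ in (0:ℝ)..(2*s), VV u 0 (x + τ • dir b σ i)) / (s^(n+1))^2 := by
    intro i
    have hIntg : ∀ l, IntervalIntegrable (fun τ => VV u l (x + τ • dir b σ i)) volume 0 (2*s) := fun l => by
      apply ContinuousOn.intervalIntegrable
      rw [uIcc_of_le (by positivity)]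
      exact (cont_VV hu l).comp (f := fun τ : ℝ => x + τ • dir b σ i) (by fun_prop) fun τ hτ => hsub (hseg i τ hτ)
    unfold ZZ
    rw [intervalIntegral.integral_add (hIntg _) ((hIntg _).div_const _), intervalIntegral.integral_div]
  have hQ2 : Q^2 ≤ (n+1) * 4 * s * ∑ i ∈ Finset.range (n+1), ∫ τ in (0:ℝ)..(2*s), ZZ u n s (x + τ • dir b σ i) := by
    have c1 := sq_sum_le_card_mul_sum_sq (s := Finset.range (n+1)) (f := fun i => LI u (n+1) x (dir b σ i) s + LI u 0 x (dir b σ i) s / s ^ (n+1))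
    rw [← hQ, Finset.card_range] at c1
    push_cast at c1
    refine c1.trans ?_
    rw [mul_assoc, mul_assoc, Finset.mul_sum (a := s), Finset.mul_sum (a := (4:ℝ))]
    gcongr with i hi
    refine (add_sq_le' _ _).trans ?_
    rw [hZ, div_pow]
    have a1 := hLI (n+1) i
    have a2 : (LI u 0 x (dir b σ i) s)^2 / (s^(n+1))^2 ≤ (2 * s * ∫ τ in (0:ℝ)..(2*s), VV u 0 (x + τ • dir b σ i)) / (s^(n+1))^2 := by
      gcongr; exact hLI 0 i
    rw [mul_div_assoc] at a2
    linarith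
  calc ∑ k, (R k u x)^2 ≤ ∑ k, (C k * β * K)^2 * Q^2 := Finset.sum_le_sum fun k _ => hRk k
    _ = (∑ k, (C k * β * K)^2) * Q^2 := by rw [Finset.sum_mul]
    _ ≤ (∑ k, (C k * β * K)^2) * ((n+1) * 4 * s * ∑ i ∈ Finset.range (n+1), ∫ τ in (0:ℝ)..(2*s), ZZ u n s (x + τ • dir b σ i)) := by gcongr
    _ = _ := by ring

lemma meas_ind {ρ r : ℝ} (hsub : Dr ρ ⊆ Dr r) {f : (Fin 2 → ℝ) → ℝ} (hf : ContinuousOn f (Dr r)) :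
    Measurable ((Dr ρ).indicator fun y => ENNReal.ofReal (f y)) := by
  classical
  rw [← piecewise_eq_indicator]
  refine ContinuousOn.measurable_piecewise ?_ continuousOn_const (isOpen_Dr ρ).measurableSet
  exact ENNReal.continuous_ofReal.comp_continuousOn (hf.mono hsub)

lemma intR {ι : Type*} [Fintype ι] (n : ℕ) (r α β : ℝ) (hα : 0 < α) (hβ : 0 < β) (R : ι → Op m) (hR : ∀ k, Sy r (n+2) 2 (R k)) :
    ∃ C ≥ (0:ℝ), ∀ (ρ s : ℝ) (u : (Fin 2 → ℝ) → (Fin m → ℝ)), Smo r u →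
    (∀ x ∈ Dr r, VV u 0 x ≤ β ^ 2) → (∀ x ∈ Dr r, ∀ I a, |pdIter u 1 x I a| ≤ α) → 0 < ρ → Dr ρ ⊆ Dr r → 0 < s → s ≤ 1 → 2 * s ≤ ρ / 4 →
    ∫⁻ x in Dr ρ, ENNReal.ofReal (∑ k, (R k u x)^2) ≤ ENNReal.ofReal (C * s^2) * ∫⁻ x in Dr ρ, ENNReal.ofReal (ZZ u n s x) := by
  obtain ⟨C, hC, H⟩ := Rbd n r α β hα hβ R hR
  refine ⟨C * (2 * (2 * ((n+1) * 2))), by positivity, ?_⟩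
  intro ρ s u hu hV h1 hρ hsub hs hs1 hsρ
  set Zt := (Dr ρ).indicator fun y => ENNReal.ofReal (ZZ u n s y) with hZt
  have hZm : Measurable Zt := meas_ind hsub (cont_ZZ hu n s)
  have hpt : ∀ x ∈ Dr ρ, ENNReal.ofReal (∑ k, (R k u x)^2) ≤ ENNReal.ofReal (C * s) *
      ∑ b, ∑ σ, ∑ i ∈ Finset.range (n+1), ∫⁻ τ in Icc 0 (2*s), Zt (x + τ • dir b σ i) := by
    intro x hx
    obtain ⟨b, σ, hseg, hb⟩ := H ρ s u hu hV h1 hρ hsub hs hs1 hsρ x hx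
    refine (ENNReal.ofReal_le_ofReal hb).trans ?_
    rw [ENNReal.ofReal_mul (by positivity)]
    gcongr
    have e : ∀ i, ENNReal.ofReal (∫ τ in (0:ℝ)..(2*s), ZZ u n s (x + τ • dir b σ i)) = ∫⁻ τ in Icc 0 (2*s), Zt (x + τ • dir b σ i) := by
      intro i
      rw [intervalIntegral.integral_of_le (by positivity), ← integral_Icc_eq_integral_Ioc]
      have hcont : ContinuousOn (fun τ : ℝ => ZZ u n s (x + τ • dir b σ i)) (Icc 0 (2*s)) :=
        (cont_ZZ hu n s).comp (by fun_prop) fun τ hτ => hsub (hseg i τ hτ)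
      rw [ofReal_integral_eq_lintegral_ofReal (hcont.integrableOn_compact isCompact_Icc) (Filter.Eventually.of_forall fun _ => ZZ_nonneg _ _ _ _)]
      refine setLIntegral_congr_fun measurableSet_Icc fun τ hτ => ?_
      rw [hZt, indicator_of_mem (hseg i τ hτ)]
    rw [ENNReal.ofReal_sum_of_nonneg (fun i _ => intervalIntegral.integral_nonneg (by positivity) fun _ _ => ZZ_nonneg _ _ _ _)]
    simp only [e]
    refine le_trans ?_ (Finset.single_le_sum (f := fun b => ∑ σ, ∑ i ∈ Finset.range (n+1), ∫⁻ τ in Icc 0 (2*s), Zt (x + τ • dir b σ i)) (fun _ _ => zero_le) (Finset.mem_univ b))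
    exact Finset.single_le_sum (f := fun σ => ∑ i ∈ Finset.range (n+1), ∫⁻ τ in Icc 0 (2*s), Zt (x + τ • dir b σ i)) (fun _ _ => zero_le) (Finset.mem_univ σ)
  have hm2 : ∀ e : Fin 2 → ℝ, Measurable (fun p : (Fin 2 → ℝ) × ℝ => Zt (p.1 + p.2 • e)) := fun e => hZm.comp (by fun_prop)
  have hm1 : ∀ e : Fin 2 → ℝ, Measurable (fun x => ∫⁻ τ in Icc 0 (2*s), Zt (x + τ • e)) := fun e =>
    (hm2 e).lintegral_prod_right'
  have hI : ∀ e : Fin 2 → ℝ, ∫⁻ x, ∫⁻ τ in Icc 0 (2*s), Zt (x + τ • e) = ENNReal.ofReal (2*s) * ∫⁻ x in Dr ρ, ENNReal.ofReal (ZZ u n s x) := by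
    intro e
    rw [lintegral_lintegral_swap (hm2 e).aemeasurable]
    have : ∀ τ : ℝ, ∫⁻ x, Zt (x + τ • e) = ∫⁻ x, Zt x := fun τ => lintegral_add_right_eq_self Zt (τ • e)
    simp only [this]
    rw [setLIntegral_const, hZt, lintegral_indicator (isOpen_Dr ρ).measurableSet, Real.volume_Icc, sub_zero, mul_comm]
  calc _ ≤ ∫⁻ x in Dr ρ, ENNReal.ofReal (C * s) * ∑ b, ∑ σ, ∑ i ∈ Finset.range (n+1), ∫⁻ τ in Icc 0 (2*s), Zt (x + τ • dir b σ i) :=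
        setLIntegral_mono' (isOpen_Dr ρ).measurableSet hpt
    _ ≤ ∫⁻ x, ENNReal.ofReal (C * s) * ∑ b, ∑ σ, ∑ i ∈ Finset.range (n+1), ∫⁻ τ in Icc 0 (2*s), Zt (x + τ • dir b σ i) :=
        setLIntegral_le_lintegral _ _
    _ = ENNReal.ofReal (C * s) * ∑ b : Fin 2, ∑ σ : Bool, ∑ i ∈ Finset.range (n+1), (ENNReal.ofReal (2*s) * ∫⁻ x in Dr ρ, ENNReal.ofReal (ZZ u n s x)) := by
        rw [lintegral_const_mul _ (by
          refine Finset.measurable_fun_sum _ fun b _ => Finset.measurable_fun_sum _ fun σ _ => Finset.measurable_fun_sum _ fun i _ => hm1 _)]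
        congr 1
        rw [lintegral_finsetSum _ (fun b _ => Finset.measurable_fun_sum _ fun σ _ => Finset.measurable_fun_sum _ fun i _ => hm1 _)]
        refine Finset.sum_congr rfl fun b _ => ?_
        rw [lintegral_finsetSum _ (fun σ _ => Finset.measurable_fun_sum _ fun i _ => hm1 _)]
        refine Finset.sum_congr rfl fun σ _ => ?_
        rw [lintegral_finsetSum _ (fun i _ => hm1 _)]
        exact Finset.sum_congr rfl fun i _ => hI _
    _ = ENNReal.ofReal (C * s) * (ENNReal.ofReal 2 * (ENNReal.ofReal 2 * (ENNReal.ofReal (n+1) * (ENNReal.ofReal (2*s) * ∫⁻ x in Dr ρ, ENNReal.ofReal (ZZ u n s x))))) := by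
        have : ENNReal.ofReal ((n:ℝ)+1) = ((n+1:ℕ):ENNReal) := by rw [← ENNReal.ofReal_natCast]; push_cast; rfl
        simp [this]
    _ = _ := by
        simp only [← mul_assoc]
        rw [← ENNReal.ofReal_mul (by positivity), ← ENNReal.ofReal_mul (by positivity), ← ENNReal.ofReal_mul (by positivity), ← ENNReal.ofReal_mul (by positivity)]
        congr 2
        ring

end Stmt18

end

section

namespace Stmt18
open MeasureTheory Set

variable {m : ℕ}

/-- lower integral of a real function on the disk -/
noncomputable def LX (f : (Fin 2 → ℝ) → ℝ) (ρ : ℝ) : ENNReal := ∫⁻ x in Dr ρ, ENNReal.ofReal (f x)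

lemma Dr_mono {ρ r : ℝ} (h0 : 0 ≤ ρ) (h : ρ ≤ r) : Dr ρ ⊆ Dr r := fun x hx => by
  have : ρ^2 ≤ r^2 := by gcongr
  exact lt_of_lt_of_le hx this

lemma LX_mono {f : (Fin 2 → ℝ) → ℝ} {ρ r : ℝ} (h0 : 0 ≤ ρ) (h : ρ ≤ r) : LX f ρ ≤ LX f r :=
  lintegral_mono_set (Dr_mono h0 h)

lemma compact_disk (ρ : ℝ) (hρ : 0 ≤ ρ) : IsCompact {x : Fin 2 → ℝ | x 0 ^ 2 + x 1 ^ 2 ≤ ρ^2} := by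
  refine Metric.isCompact_of_isClosed_isBounded (isClosed_le (by fun_prop) (by fun_prop)) ?_
  refine (Metric.isBounded_closedBall (x := (0 : Fin 2 → ℝ)) (r := ρ)).subset fun x hx => ?_
  rw [mem_closedBall_zero_iff, pi_norm_le_iff_of_nonneg hρ]
  have hx : x 0 ^ 2 + x 1 ^ 2 ≤ ρ^2 := hx
  intro i
  rw [Real.norm_eq_abs]
  apply abs_le_of_sq_le_sq _ hρ
  fin_cases i
  · simp; nlinarith [sq_nonneg (x 1)]
  · simp; nlinarith [sq_nonneg (x 0)]

lemma vol_Dr (ρ : ℝ) (hρ : 0 ≤ ρ) : volume (Dr ρ) < ⊤ := by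
  have hs : Dr ρ ⊆ {x : Fin 2 → ℝ | x 0 ^ 2 + x 1 ^ 2 ≤ ρ^2} := fun x hx => le_of_lt (show x 0^2 + x 1^2 < ρ^2 from hx)
  exact (measure_mono hs).trans_lt (compact_disk ρ hρ).measure_lt_top

lemma LX_fin {f : (Fin 2 → ℝ) → ℝ} {ρ r : ℝ} (h0 : 0 ≤ ρ) (h : ρ < r) (hf : ContinuousOn f (Dr r)) : LX f ρ ≠ ⊤ := by
  have hK : {x : Fin 2 → ℝ | x 0 ^ 2 + x 1 ^ 2 ≤ ρ^2} ⊆ Dr r := fun x hx => by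
    have : ρ^2 < r^2 := by gcongr
    exact lt_of_le_of_lt hx this
  have hi := (hf.mono hK).integrableOn_compact (μ := volume) (compact_disk ρ h0)
  have hs : Dr ρ ⊆ {x : Fin 2 → ℝ | x 0 ^ 2 + x 1 ^ 2 ≤ ρ^2} := fun x hx => le_of_lt (show x 0^2 + x 1^2 < ρ^2 from hx)
  have hi2 : IntegrableOn f (Dr ρ) := hi.mono_set hs
  exact ((lintegral_ofReal_le_lintegral_enorm f).trans_lt hi2.2).ne

lemma LX_sup {f : (Fin 2 → ℝ) → ℝ} {r : ℝ} (hr : 0 < r) (M : ENNReal) (h : ∀ ρ, r/2 ≤ ρ → ρ < r → LX f ρ ≤ M) : LX f r ≤ M := by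
  set ρ : ℕ → ℝ := fun k => r * (1 - 1/(k+2)) with hρ
  have hk : ∀ k : ℕ, 1/((k:ℝ)+2) ≤ 1/2 ∧ 0 < 1/((k:ℝ)+2) := fun k => ⟨by gcongr; linarith [Nat.cast_nonneg (α := ℝ) k], by positivity⟩
  have h1 : ∀ k, r/2 ≤ ρ k := fun k => by rw [hρ]; beta_reduce; nlinarith [hk k]
  have h2 : ∀ k, ρ k < r := fun k => by rw [hρ]; beta_reduce; nlinarith [hk k]
  have hmono : Monotone ρ := fun a b hab => by
    rw [hρ]; beta_reduce; gcongr
  have hU : Dr r = ⋃ k, Dr (ρ k) := by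
    apply Subset.antisymm
    · intro x hx
      have ht : Filter.Tendsto (fun k => (ρ k)^2) Filter.atTop (nhds (r^2)) := by
        have a : Filter.Tendsto (fun k : ℕ => 1/((k:ℝ)+2)) Filter.atTop (nhds 0) := by
          have := (tendsto_one_div_add_atTop_nhds_zero_nat (𝕜 := ℝ)).comp (Filter.tendsto_add_atTop_nat 1)
          refine this.congr fun k => ?_
          simp; ring
        have := ((a.const_sub 1).const_mul r).pow 2
        simpa [hρ] using this
      obtain ⟨k, hk⟩ := (ht.eventually (lt_mem_nhds (show x 0 ^ 2 + x 1 ^ 2 < r^2 from hx))).exists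
      exact mem_iUnion.mpr ⟨k, hk⟩
    · exact iUnion_subset fun k => Dr_mono (by linarith [h1 k]) (h2 k).le
  unfold LX
  rw [hU, setLIntegral_iUnion_of_directed]
  · exact iSup_le fun k => h (ρ k) (h1 k) (h2 k)
  · exact directed_of_isDirected_le fun a b hab => Dr_mono (by linarith [h1 a]) (hmono hab)

lemma absorb {X a : ENNReal} (hX : X ≠ ⊤) (h : X ≤ a + ENNReal.ofReal (1/2) * X) : X ≤ 2 * a := by
  by_cases ha : a = ⊤
  · simp [ha]
  lift X to NNReal using hX
  lift a to NNReal using ha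
  have e : ENNReal.ofReal (1/2) = ((1/2 : NNReal) : ENNReal) := by
    rw [ENNReal.ofReal]; congr 1; ext; simp
  rw [e] at h
  norm_cast at h ⊢
  have h' : (X:ℝ) ≤ a + (1/2) * X := by exact_mod_cast h
  have : (X:ℝ) ≤ 2 * a := by linarith
  exact_mod_cast this

lemma LX_le {f g h : (Fin 2 → ℝ) → ℝ} {C ρ : ℝ} (hC : 0 ≤ C) (hh : ∀ x ∈ Dr ρ, 0 ≤ h x)
    (hm : AEMeasurable (fun x => ENNReal.ofReal (g x)) (volume.restrict (Dr ρ)))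
    (H : ∀ x ∈ Dr ρ, f x ≤ C * (g x + h x)) : LX f ρ ≤ ENNReal.ofReal C * (LX g ρ + LX h ρ) := by
  unfold LX
  rw [← lintegral_add_left' hm, ← lintegral_const_mul' _ _ ENNReal.ofReal_ne_top]
  refine setLIntegral_mono' (isOpen_Dr ρ).measurableSet fun x hx => ?_
  refine (ENNReal.ofReal_le_ofReal (H x hx)).trans ?_
  rw [ENNReal.ofReal_mul hC]
  gcongr
  exact ENNReal.ofReal_add_le

lemma aem {f : (Fin 2 → ℝ) → ℝ} {ρ r : ℝ} (hsub : Dr ρ ⊆ Dr r) (hf : ContinuousOn f (Dr r)) :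
    AEMeasurable (fun x => ENNReal.ofReal (f x)) (volume.restrict (Dr ρ)) :=
  ((hf.mono hsub).aemeasurable (isOpen_Dr ρ).measurableSet).ennreal_ofReal

lemma int_eq {f : (Fin 2 → ℝ) → ℝ} {r : ℝ} (hf : ContinuousOn f (Dr r)) (h0 : ∀ x ∈ Dr r, 0 ≤ f x) :
    ∫ x in Dr r, f x = (LX f r).toReal := by
  rw [integral_eq_lintegral_of_nonneg_ae]
  · rfl
  · exact (ae_restrict_iff' (isOpen_Dr r).measurableSet).mpr (Filter.Eventually.of_forall h0)
  · exact hf.aestronglyMeasurable (isOpen_Dr r).measurableSet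

lemma LX0_fin {r β : ℝ} (hr : 0 < r) {u : (Fin 2 → ℝ) → (Fin m → ℝ)} (hV : ∀ x ∈ Dr r, VV u 0 x ≤ β ^ 2) : LX (VV u 0) r ≠ ⊤ := by
  have : LX (VV u 0) r ≤ ∫⁻ x in Dr r, ENNReal.ofReal (β^2) :=
    setLIntegral_mono' (isOpen_Dr r).measurableSet fun x hx => ENNReal.ofReal_le_ofReal (hV x hx)
  refine (this.trans_lt ?_).ne
  rw [setLIntegral_const]
  exact ENNReal.mul_lt_top ENNReal.ofReal_lt_top (vol_Dr r hr.le)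

/-- the standing hypotheses -/
def Hyp (r α β : ℝ) (u : (Fin 2 → ℝ) → (Fin m → ℝ)) : Prop :=
  Smo r u ∧ (∀ x ∈ Dr r, VV u 0 x ≤ β ^ 2) ∧ (∀ x ∈ Dr r, ∀ I a, |pdIter u 1 x I a| ≤ α)

lemma est0 (r α β : ℝ) (hr : 0 < r) (hα : 0 < α) : ∃ C > (0:ℝ), ∀ u : (Fin 2 → ℝ) → (Fin m → ℝ), Hyp r α β u →
    (∫ x in Dr r, VV u 0 x) ≤ C * (∫ x in Dr r, nC u 0 x) := by
  obtain ⟨R, -, hR0, C, hC, H⟩ := pt (m := m) r α hα 0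
  refine ⟨C, hC, fun u ⟨hu, hV, h1⟩ => ?_⟩
  have hR : ∀ x, ∑ I, ∑ B, (R I B u x)^2 = 0 := fun x => by simp [hR0 rfl]
  have hb : ∀ x ∈ Dr r, VV u 0 x ≤ C * nC u 0 x ∧ nC u 0 x ≤ C * VV u 0 x ∧ 0 ≤ nC u 0 x := fun x hx => by
    have := H u hu x hx (h1 x hx)
    simpa only [hR, add_zero] using this
  have ms := (isOpen_Dr r).measurableSet
  have hIntg : ∀ f : (Fin 2 → ℝ) → ℝ, ContinuousOn f (Dr r) → (∀ x ∈ Dr r, |f x| ≤ (1 + C) * β^2) → IntegrableOn f (Dr r) := fun f hf hb =>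
    Integrable.mono' (g := fun _ => (1+C) * β^2) (integrableOn_const (vol_Dr r hr.le).ne) (hf.aestronglyMeasurable ms)
      ((ae_restrict_iff' ms).mpr (Filter.Eventually.of_forall hb))
  rw [← integral_const_mul]
  refine setIntegral_mono_on (hIntg _ (cont_VV hu 0) fun x hx => ?_) ((hIntg _ (cont_nC hu 0) fun x hx => ?_).const_mul C) ms fun x hx => (hb x hx).1
  · rw [abs_of_nonneg (VV_nonneg _ _ _)]
    have := hV x hx
    nlinarith [sq_nonneg β]
  · rw [abs_of_nonneg (hb x hx).2.2]
    have := hV x hx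
    have := (hb x hx).2.1
    nlinarith [sq_nonneg β]

lemma est1 (n : ℕ) (r α β : ℝ) (hr : 0 < r) (hα : 0 < α) (hβ : 0 < β) : ∃ C > (0:ℝ), ∀ u : (Fin 2 → ℝ) → (Fin m → ℝ), Hyp r α β u →
    (∫ x in Dr r, VV u (n+1) x) ≤ C * ((∫ x in Dr r, nC u (n+1) x) + ∫ x in Dr r, VV u 0 x) := by
  obtain ⟨R, hR, -, C, hC, H⟩ := pt (m := m) r α hα (n+1)
  obtain ⟨C', hC', H'⟩ := intR (m := m) n r α β hα hβ (fun k : (Fin (n+1+2) → Fin 2) × (Fin 2 ⊕ Fin m) => R k.1 k.2) (fun k => hR k.1 k.2)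
  set s := min (min 1 (r/16)) (1 / (1 + 2 * (C * C'))) with hs
  have hs0 : 0 < s := by positivity
  have hs1 : s ≤ 1 := (min_le_left _ _).trans (min_le_left _ _)
  have hs2 : s ≤ r/16 := (min_le_left _ _).trans (min_le_right _ _)
  have hs3 : C * (C' * s^2) ≤ 1/2 := by
    have a : s * (1 + 2 * (C * C')) ≤ 1 := by
      rw [← le_div_iff₀ (by positivity)]; exact min_le_right _ _
    have b : C * C' * s^2 ≤ C * C' * s := by
      have : s^2 ≤ s := by nlinarith
      gcongr
    nlinarith
  set t := 1 / (s^(n+1))^2 with ht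
  have ht0 : 0 ≤ t := by positivity
  set M := max (2 * C) t + 2 * C + t with hM
  refine ⟨2 * C + t, by positivity, fun u ⟨hu, hV, h1⟩ => ?_⟩
  set Rf : (Fin 2 → ℝ) → ℝ := fun x => ∑ I, ∑ B, (R I B u x)^2 with hRf
  have hRf0 : ∀ x, 0 ≤ Rf x := fun x => Finset.sum_nonneg fun _ _ => Finset.sum_nonneg fun _ _ => sq_nonneg _
  have hc : ∀ ρ, r/2 ≤ ρ → ρ ≤ r → LX Rf ρ ≤ ENNReal.ofReal (C' * s^2) * (LX (VV u (n+1)) ρ + ENNReal.ofReal t * LX (VV u 0) ρ) := by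
    intro ρ h2 h3
    have hsub := Dr_mono (by linarith) h3
    have := H' ρ s u hu hV h1 (by linarith) hsub hs0 hs1 (by linarith)
    simp only [Fintype.sum_prod_type] at this
    refine this.trans ?_
    gcongr
    unfold LX
    rw [← lintegral_const_mul' _ _ ENNReal.ofReal_ne_top, ← lintegral_add_left' (aem hsub (cont_VV hu (n+1)))]
    refine setLIntegral_mono' (isOpen_Dr ρ).measurableSet fun x hx => ?_
    rw [← ENNReal.ofReal_mul ht0, ← ENNReal.ofReal_add (VV_nonneg _ _ _) (mul_nonneg ht0 (VV_nonneg _ _ _))]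
    apply ENNReal.ofReal_le_ofReal
    unfold ZZ
    rw [ht, div_mul_eq_mul_div, one_mul]
  have ha : ∀ ρ, r/2 ≤ ρ → ρ ≤ r → LX (VV u (n+1)) ρ ≤ ENNReal.ofReal C * (LX (nC u (n+1)) ρ + LX Rf ρ) := by
    intro ρ h2 h3
    have hsub := Dr_mono (by linarith) h3
    exact LX_le hC.le (fun x _ => hRf0 x) (aem hsub (cont_nC hu _)) fun x hx => (H u hu x (hsub hx) (h1 x (hsub hx))).1
  have hb : LX (nC u (n+1)) r ≤ ENNReal.ofReal C * (LX (VV u (n+1)) r + LX Rf r) :=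
    LX_le hC.le (fun x _ => hRf0 x) (aem Subset.rfl (cont_VV hu _)) fun x hx => (H u hu x hx (h1 x hx)).2.1
  set X := LX (VV u (n+1)) r with hX
  set Y := LX (nC u (n+1)) r with hY
  set X0 := LX (VV u 0) r with hX0
  have hX0f : X0 ≠ ⊤ := LX0_fin hr hV
  have hmain : X ≤ ENNReal.ofReal (2 * C) * Y + ENNReal.ofReal t * X0 := by
    refine LX_sup hr _ fun ρ h2 h3 => ?_
    have hfin : LX (VV u (n+1)) ρ ≠ ⊤ := LX_fin (by linarith) h3 (cont_VV hu _)
    have hstep : LX (VV u (n+1)) ρ ≤ (ENNReal.ofReal C * Y + ENNReal.ofReal (1/2) * (ENNReal.ofReal t * X0)) + ENNReal.ofReal (1/2) * LX (VV u (n+1)) ρ := by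
      calc _ ≤ ENNReal.ofReal C * (LX (nC u (n+1)) ρ + LX Rf ρ) := ha ρ h2 h3.le
        _ ≤ ENNReal.ofReal C * (Y + ENNReal.ofReal (C' * s^2) * (LX (VV u (n+1)) ρ + ENNReal.ofReal t * X0)) := by
            have m1 : LX (nC u (n+1)) ρ ≤ Y := LX_mono (by linarith) h3.le
            have m2 : LX (VV u 0) ρ ≤ X0 := LX_mono (by linarith) h3.le
            gcongr
            exact (hc ρ h2 h3.le).trans (by gcongr)
        _ = ENNReal.ofReal C * Y + ENNReal.ofReal (C * (C' * s^2)) * (LX (VV u (n+1)) ρ + ENNReal.ofReal t * X0) := by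
            rw [mul_add, ← mul_assoc, ← ENNReal.ofReal_mul hC.le]
        _ ≤ ENNReal.ofReal C * Y + ENNReal.ofReal (1/2) * (LX (VV u (n+1)) ρ + ENNReal.ofReal t * X0) := by
            gcongr
        _ = _ := by ring
    refine (absorb hfin hstep).trans (le_of_eq ?_)
    have e2 : (2:ENNReal) = ENNReal.ofReal 2 := by simp
    rw [mul_add, e2, ← mul_assoc, ← mul_assoc, ← ENNReal.ofReal_mul (by norm_num), ← ENNReal.ofReal_mul (by norm_num)]
    norm_num
  rw [int_eq (cont_VV hu _) (fun x _ => VV_nonneg _ _ _), int_eq (cont_VV hu _) (fun x _ => VV_nonneg _ _ _),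
    int_eq (cont_nC hu _) (fun x hx => (H u hu x hx (h1 x hx)).2.2), ← hX, ← hX0, ← hY]
  by_cases hYt : Y = ⊤
  · have : X = ⊤ := by
      by_contra hXf
      have hRfin : LX Rf r ≠ ⊤ := by
        refine ne_top_of_le_ne_top ?_ (hc r (by linarith) le_rfl)
        exact ENNReal.mul_ne_top ENNReal.ofReal_ne_top (ENNReal.add_ne_top.mpr ⟨hXf, ENNReal.mul_ne_top ENNReal.ofReal_ne_top hX0f⟩)
      rw [hYt] at hb
      exact absurd (top_le_iff.mp hb) (ENNReal.mul_ne_top ENNReal.ofReal_ne_top (ENNReal.add_ne_top.mpr ⟨hXf, hRfin⟩))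
    rw [this]
    simp only [ENNReal.toReal_top]
    positivity
  · have hfinR : ENNReal.ofReal (2 * C) * Y + ENNReal.ofReal t * X0 ≠ ⊤ :=
      ENNReal.add_ne_top.mpr ⟨ENNReal.mul_ne_top ENNReal.ofReal_ne_top hYt, ENNReal.mul_ne_top ENNReal.ofReal_ne_top hX0f⟩
    have := ENNReal.toReal_mono hfinR hmain
    rw [ENNReal.toReal_add (ENNReal.mul_ne_top ENNReal.ofReal_ne_top hYt) (ENNReal.mul_ne_top ENNReal.ofReal_ne_top hX0f),
      ENNReal.toReal_mul, ENNReal.toReal_mul, ENNReal.toReal_ofReal (by positivity), ENNReal.toReal_ofReal ht0] at this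
    have p1 : 0 ≤ Y.toReal := ENNReal.toReal_nonneg
    have p2 : 0 ≤ X0.toReal := ENNReal.toReal_nonneg
    nlinarith [mul_nonneg hC.le p2, mul_nonneg ht0 p1]

lemma int_nC_nonneg {r α β : ℝ} (hα : 0 < α) {u : (Fin 2 → ℝ) → (Fin m → ℝ)} (h : Hyp r α β u) (l : ℕ) :
    0 ≤ ∫ x in Dr r, nC u l x := by
  obtain ⟨R, -, -, C, hC, H⟩ := pt (m := m) r α hα l
  exact setIntegral_nonneg (isOpen_Dr r).measurableSet fun x hx => (H u h.1 x hx (h.2.2 x hx)).2.2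

lemma est (l : ℕ) (r α β : ℝ) (hr : 0 < r) (hα : 0 < α) (hβ : 0 < β) : ∃ C > (0:ℝ), ∀ u : (Fin 2 → ℝ) → (Fin m → ℝ), Hyp r α β u →
    (∫ x in Dr r, VV u l x) ≤ C * ((∫ x in Dr r, nC u l x) + ∫ x in Dr r, nC u 0 x) := by
  obtain ⟨C0, hC0, H0⟩ := est0 (m := m) r α β hr hα
  rcases l with _ | n
  · refine ⟨C0, hC0, fun u h => (H0 u h).trans ?_⟩
    have := int_nC_nonneg hα h 0
    gcongr
    linarith
  · obtain ⟨C1, hC1, H1⟩ := est1 (m := m) n r α β hr hα hβ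
    refine ⟨C1 * (1 + C0), by positivity, fun u h => (H1 u h).trans ?_⟩
    have p0 := int_nC_nonneg hα h 0
    have p1 := int_nC_nonneg hα h (n+1)
    rw [mul_assoc]
    gcongr
    have := H0 u h
    nlinarith

lemma final (m : ℕ) (r α β : ℝ) (hr : 0 < r) (hα : 0 < α) (hβ : 0 < β)
    (k : ℕ) :
    ∃ C > (0:ℝ), ∀ u : (Fin 2 → ℝ) → (Fin m → ℝ),
      ContDiffOn ℝ (⊤ : ℕ∞) u (Dr r) →
      (∀ x ∈ Dr r, ∑ i, ∑ a, (fderiv ℝ u x (Pi.single i 1) a) ^ 2 ≤ α ^ 2) →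
      (∀ x ∈ Dr r, ∑ I : Fin 2 → Fin 2, ∑ a, (pdIter u 2 x I a) ^ 2 ≤ β ^ 2) →
      Wnorm r k u ≤ C * ∑ s ∈ Finset.Icc 1 (max k 1), HAnorm r k u ^ s := by
  choose C hC H using fun l => est (m := m) l r α β hr hα hβ
  set S : ℝ := ∑ l ∈ Finset.range (k+1), C l with hS
  have hS0 : 0 ≤ S := Finset.sum_nonneg fun l _ => (hC l).le
  refine ⟨Real.sqrt (2 * S) + 1, by positivity, fun u hu hD hV => ?_⟩
  have hyp : Hyp r α β u := by
    refine ⟨hu, hV, fun x hx I a => ?_⟩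
    apply abs_le_of_sq_le_sq _ hα.le
    refine le_trans ?_ (hD x hx)
    refine le_trans ?_ (Finset.single_le_sum (f := fun i => ∑ a, (fderiv ℝ u x (Pi.single i 1) a) ^ 2) (fun i _ => Finset.sum_nonneg fun _ _ => sq_nonneg _) (Finset.mem_univ (I 0)))
    exact Finset.single_le_sum (f := fun a => (fderiv ℝ u x (Pi.single (I 0) 1) a) ^ 2) (fun _ _ => sq_nonneg _) (Finset.mem_univ a)
  have hH0 : 0 ≤ HAnorm r k u := Real.sqrt_nonneg _
  have hmain : Wnorm r k u ≤ Real.sqrt (2 * S) * HAnorm r k u := by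
    unfold Wnorm HAnorm
    rw [← Real.sqrt_mul (by positivity)]
    apply Real.sqrt_le_sqrt
    set N := ∑ l ∈ Finset.range (k+1), ∫ x in Dr r, nC u l x with hN
    change ∑ l ∈ Finset.range (k+1), ∫ x in Dr r, VV u l x ≤ 2 * S * N
    have hNl : ∀ l ∈ Finset.range (k+1), ∫ x in Dr r, nC u l x ≤ N := fun l hl =>
      Finset.single_le_sum (f := fun l => ∫ x in Dr r, nC u l x) (fun l _ => int_nC_nonneg hα hyp l) hl
    calc _ ≤ ∑ l ∈ Finset.range (k+1), C l * (N + N) := Finset.sum_le_sum fun l hl => by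
          refine (H l u hyp).trans ?_
          have := hNl l hl
          have := hNl 0 (by simp)
          have := hC l
          gcongr
      _ = _ := by rw [← Finset.sum_mul, ← hS]; ring
  have hsum : HAnorm r k u ≤ ∑ s ∈ Finset.Icc 1 (max k 1), HAnorm r k u ^ s := by
    have := Finset.single_le_sum (f := fun s => HAnorm r k u ^ s) (s := Finset.Icc 1 (max k 1)) (fun s _ => by positivity) (a := 1) (by simp)
    simpa using this
  calc _ ≤ _ := hmain
    _ ≤ (Real.sqrt (2 * S) + 1) * HAnorm r k u := by gcongr; linarith
    _ ≤ _ := by gcongr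

end Stmt18

end

open Stmt18 MeasureTheory in
/-- Lemma 4.5: for a graph over the disk `D_r` with `|Du| ≤ α` and
`|D²u| ≤ β`: `‖D²u‖_{W^{k,2}} ≤ C Σ_{s=1}^{max(k,1)} ‖A‖^s_{H^{k,2}}` with
`C = C(r, α, β, k)`; in particular `‖D²u‖_{L²} ≤ C₀ ‖A‖_{L²}` for `k = 0`. -/
theorem stmt_18 (m : ℕ) (r α β : ℝ) (hr : 0 < r) (hα : 0 < α) (hβ : 0 < β)
    (k : ℕ) :
    ∃ C > (0:ℝ), ∀ u : (Fin 2 → ℝ) → (Fin m → ℝ),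
      ContDiffOn ℝ (⊤ : ℕ∞) u (Dr r) →
      (∀ x ∈ Dr r, ∑ i, ∑ a, (fderiv ℝ u x (Pi.single i 1) a) ^ 2 ≤ α ^ 2) →
      (∀ x ∈ Dr r, ∑ I : Fin 2 → Fin 2, ∑ a, (pdIter u 2 x I a) ^ 2 ≤ β ^ 2) →
      Wnorm r k u ≤ C * ∑ s ∈ Finset.Icc 1 (max k 1), HAnorm r k u ^ s := by
  exact final m r α β hr hα hβ k
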